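/- arXiv:1607.01892 — 2 statements merged into one kernel-verified Lean document; each statement's English description precedes it below -/
import Mathlib

section
/- Let Y^n ~ N_n(0, I_n) and for τ ≥ 1/n set H_n(τ) = Σ_{i=1}^n var(θ_i | τ, Y_i), the posterior expected squared distance E(‖θ − θ̂(τ)‖₂² | τ, Y^n) under the horseshoe posterior. Then for any C > 0, as τ → 0, sup_{t ∈ [C^{-1}τ, Cτ]} (nτζ_τ)^{-1} | H_n(t) − E_0 H_n(t) | → 0 in probability. -/
open MeasureTheory ProbabilityTheory Filter Set Real Asymptotics
open scoped ENNReal NNReal BigOperators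

noncomputable section

/-- Standard normal density `φ`. -/
def phiN (x : ℝ) : ℝ := (Real.sqrt (2 * Real.pi))⁻¹ * Real.exp (-(x ^ 2) / 2)

/-- Horseshoe prior density with global parameter `τ`. -/
def gHS (τ θ : ℝ) : ℝ :=
  ∫ l in Set.Ioi (0 : ℝ), phiN (θ / (l * τ)) / (l * τ) * (2 / (Real.pi * (1 + l ^ 2)))

/-- Unnormalised marginal posterior density of `θᵢ` given `Yᵢ = y` (parameter `τ`). -/
def postDens (τ y θ : ℝ) : ℝ := phiN (y - θ) * gHS τ θ

/-- Bayesian marginal density `ψ_τ(y)` of one observation. -/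
def margDens (τ y : ℝ) : ℝ := ∫ θ, postDens τ y θ

/-- Marginal posterior probability `Π(θᵢ ∈ A | Yᵢ = y, τ)`. -/
def postProb (τ y : ℝ) (A : Set ℝ) : ℝ := (∫ θ in A, postDens τ y θ) / margDens τ y

/-- Marginal posterior mean `θ̂ᵢ(τ)`. -/
def postMean (τ y : ℝ) : ℝ := (∫ θ, θ * postDens τ y θ) / margDens τ y

/-- Marginal posterior variance. -/
def postVar (τ y : ℝ) : ℝ :=
  (∫ θ, (θ - postMean τ y) ^ 2 * postDens τ y θ) / margDens τ y

/-- Marginal posterior fourth central moment. -/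
def postMom4 (τ y : ℝ) : ℝ :=
  (∫ θ, (θ - postMean τ y) ^ 4 * postDens τ y θ) / margDens τ y

/-- `ζ_τ = √(2 log (1/τ))`. -/
def zet (τ : ℝ) : ℝ := Real.sqrt (2 * Real.log (1 / τ))

/-- `τ_n(p) = (p/n) √(log (n/p))`. -/
def tauOpt (n p : ℕ) : ℝ := ((p : ℝ) / (n : ℝ)) * Real.sqrt (Real.log ((n : ℝ) / (p : ℝ)))

/-- The law `P_{θ₀}` of `Y^n`. -/
def Pdata {n : ℕ} (θ₀ : Fin n → ℝ) : Measure (Fin n → ℝ) :=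
  Measure.pi fun i => gaussianReal (θ₀ i) 1

/-- The standard normal upper `α`-quantile `z_α`. -/
def zquant (α : ℝ) : ℝ := sInf {z : ℝ | ((gaussianReal 0 1) (Set.Ioi z)).toReal ≤ α}

/-- Nearly black vectors `ℓ₀[p]`. -/
def nearlyBlack (n p : ℕ) : Set (Fin n → ℝ) :=
  {θ | ({i | θ i ≠ 0} : Set (Fin n)).ncard ≤ p}

/-- Unnormalised posterior density of the full vector `θ` given `Y^n = y` and `τ`. -/
def fullDens {n : ℕ} (τ : ℝ) (y θ : Fin n → ℝ) : ℝ := ∏ i, postDens τ (y i) (θ i)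

/-- Posterior probability `Π(θ ∈ A | Y^n = y, τ)` of a set of vectors. -/
def fullPostProb {n : ℕ} (τ : ℝ) (y : Fin n → ℝ) (A : Set (Fin n → ℝ)) : ℝ :=
  (∫ θ in A, fullDens τ y θ) / ∫ θ, fullDens τ y θ

/-- Posterior mean of the full vector (coordinatewise, by conditional independence). -/
def fullPostMean {n : ℕ} (τ : ℝ) (y : Fin n → ℝ) : Fin n → ℝ := fun i => postMean τ (y i)

/-- Euclidean distance on `ℝⁿ`. -/
def l2dist {n : ℕ} (a b : Fin n → ℝ) : ℝ := Real.sqrt (∑ i, (a i - b i) ^ 2)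

/-- Marginal likelihood of `τ`. -/
def lik {n : ℕ} (τ : ℝ) (y : Fin n → ℝ) : ℝ := ∏ i, margDens τ (y i)

/-- Unnormalised hierarchical posterior weight of `τ` given the data. -/
def hierWeight {n : ℕ} (pr : ℝ → ℝ) (y : Fin n → ℝ) (τ : ℝ) : ℝ := pr τ * lik τ y

/-- Hierarchical posterior distribution of `τ`. -/
def hierTauProb {n : ℕ} (pr : ℝ → ℝ) (y : Fin n → ℝ) (A : Set ℝ) : ℝ :=
  (∫ τ in A, hierWeight pr y τ) / ∫ τ, hierWeight pr y τ

/-- Hierarchical marginal posterior probability for coordinate `i`. -/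
def hierPostProb {n : ℕ} (pr : ℝ → ℝ) (y : Fin n → ℝ) (i : Fin n) (A : Set ℝ) : ℝ :=
  (∫ τ, hierWeight pr y τ * postProb τ (y i) A) / ∫ τ, hierWeight pr y τ

/-- Hierarchical marginal posterior mean for coordinate `i`. -/
def hierPostMean {n : ℕ} (pr : ℝ → ℝ) (y : Fin n → ℝ) (i : Fin n) : ℝ :=
  (∫ τ, hierWeight pr y τ * postMean τ (y i)) / ∫ τ, hierWeight pr y τ

/-- Hierarchical posterior probability of a set of vectors. -/
def hierFullPostProb {n : ℕ} (pr : ℝ → ℝ) (y : Fin n → ℝ) (A : Set (Fin n → ℝ)) : ℝ :=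
  (∫ τ, pr τ * ∫ θ in A, fullDens τ y θ) / ∫ τ, pr τ * ∫ θ, fullDens τ y θ

/-- Hierarchical posterior mean vector. -/
def hierFullPostMean {n : ℕ} (pr : ℝ → ℝ) (y : Fin n → ℝ) : Fin n → ℝ :=
  fun i => hierPostMean pr y i

/-- The functions `I_k`. -/
def Ik (τ k y : ℝ) : ℝ :=
  ∫ z in Set.Ioc (0 : ℝ) 1, z ^ k * (τ ^ 2 + (1 - τ ^ 2) * z)⁻¹ * Real.exp (y ^ 2 * z / 2)

/-- The function `m_τ`. -/
def mHS (τ y : ℝ) : ℝ :=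
  y ^ 2 * ((Ik τ (1 / 2) y - Ik τ (3 / 2) y) / Ik τ (-(1 / 2)) y) -
    Ik τ (1 / 2) y / Ik τ (-(1 / 2)) y

/-- The excessive-bias restriction with witness `q`. -/
def EBRwith (n : ℕ) (A Cs C : ℝ) (θ : Fin n → ℝ) (q : ℕ) : Prop :=
  1 ≤ q ∧
    (∑ i, if |θ i| < A * Real.sqrt (2 * Real.log ((n : ℝ) / (q : ℝ))) then (θ i) ^ 2 else 0)
        ≤ C * (q : ℝ) * Real.log ((n : ℝ) / (q : ℝ)) ∧
    (q : ℝ) / Cs ≤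
      (({i | A * Real.sqrt (2 * Real.log ((n : ℝ) / (q : ℝ))) ≤ |θ i|} : Set (Fin n)).ncard : ℝ)

/-- The excessive-bias restriction. -/
def EBR (n : ℕ) (A Cs C : ℝ) (θ : Fin n → ℝ) : Prop := ∃ q, EBRwith n A Cs C θ q

/-- The class `Θ[p]`. -/
def ThetaClass (n p : ℕ) (A Cs C : ℝ) : Set (Fin n → ℝ) :=
  {θ | θ ∈ nearlyBlack n p ∧ EBR n A Cs C θ}

/-- Smallest witness `q` in the excessive-bias restriction. -/
def qmin (n : ℕ) (A Cs C : ℝ) (θ : Fin n → ℝ) : ℕ := sInf {q | EBRwith n A Cs C θ q}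

/-- `p̃(θ₀)`: the number of coordinates above threshold for the smallest witness `q`. -/
def ptilde (n : ℕ) (A Cs C : ℝ) (θ : Fin n → ℝ) : ℕ :=
  ({i | A * Real.sqrt (2 * Real.log ((n : ℝ) / (qmin n A Cs C θ : ℝ))) ≤ |θ i|} :
    Set (Fin n)).ncard

lemma phiN_pos (x : ℝ) : 0 < phiN x := by unfold phiN; positivity

lemma phiN_cont : Continuous phiN := by unfold phiN; fun_prop

lemma phiN_c_le : (Real.sqrt (2 * Real.pi))⁻¹ ≤ 1 := by
  apply inv_le_one_of_one_le₀
  rw [Real.one_le_sqrt]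
  nlinarith [Real.pi_gt_three]

lemma phiN_le_exp (x : ℝ) : phiN x ≤ Real.exp (-(x ^ 2) / 2) := by
  unfold phiN
  exact mul_le_of_le_one_left (Real.exp_pos _).le phiN_c_le

lemma exp_half_le (u : ℝ) : Real.exp (-u) * (1 + u) ≤ 1 := by
  rw [Real.exp_neg, inv_mul_le_one₀ (Real.exp_pos _)]
  linarith [Real.add_one_le_exp u]

/-- `phiN x ≤ (1 + x²/4)⁻²`. -/
lemma phiN_le_quart (x : ℝ) : phiN x * (1 + x ^ 2 / 4) ^ 2 ≤ 1 := by
  have h := exp_half_le (x ^ 2 / 4)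
  have h2 : Real.exp (-(x ^ 2) / 2) = Real.exp (-(x ^ 2 / 4)) ^ 2 := by
    rw [← Real.exp_nat_mul]; congr 1; push_cast; ring
  calc phiN x * (1 + x ^ 2 / 4) ^ 2 ≤ Real.exp (-(x ^ 2) / 2) * (1 + x ^ 2 / 4) ^ 2 := by
        gcongr; exact phiN_le_exp x
    _ = (Real.exp (-(x ^ 2 / 4)) * (1 + x ^ 2 / 4)) ^ 2 := by rw [h2]; ring
    _ ≤ 1 := by apply pow_le_one₀ (by positivity) h

lemma phiN_le_one (x : ℝ) : phiN x ≤ 1 := by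
  refine (phiN_le_exp x).trans ?_
  rw [Real.exp_le_one_iff]; nlinarith [sq_nonneg x]

lemma phiN_sq_le (x : ℝ) : x ^ 2 * phiN x ≤ 2 := by
  have h := phiN_le_quart x
  nlinarith [phiN_pos x, mul_nonneg (phiN_pos x).le (sq_nonneg (x ^ 2)), mul_nonneg (phiN_pos x).le (sq_nonneg x)]

lemma phiN_anti {x y : ℝ} (h : |x| ≤ |y|) : phiN y ≤ phiN x := by
  unfold phiN
  have := sq_le_sq.2 h
  gcongr

lemma phiN_abs (x : ℝ) : phiN |x| = phiN x := by simp [phiN]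

lemma phiN_integrable : Integrable phiN := by
  unfold phiN
  refine Integrable.const_mul ?_ _
  have := integrable_exp_neg_mul_sq (b := 1/2) (by norm_num)
  refine this.congr (Eventually.of_forall fun x => ?_)
  simp only; congr 1; ring

lemma phiN_sq_integrable : Integrable (fun x => x ^ 2 * phiN x) := by
  have := (integrable_rpow_mul_exp_neg_mul_sq (b := 1/2) (by norm_num) (s := 2) (by norm_num)).const_mul
    ((Real.sqrt (2 * Real.pi))⁻¹)
  refine this.congr (Eventually.of_forall fun x => ?_)
  simp only [phiN]
  have : Real.exp (-(1/2) * x ^ 2) = Real.exp (-(x ^ 2) / 2) := by congr 1; ring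
  rw [this, show x ^ (2:ℝ) = x ^ 2 by exact_mod_cast Real.rpow_natCast x 2]; ring

lemma phiN_integral : ∫ x, phiN x = 1 := by
  have := integral_gaussianPDFReal_eq_one (0:ℝ) (v := 1) (by norm_num)
  rw [← this]
  congr 1; ext x
  simp [phiN, gaussianPDFReal]

/-- kernel -/
def kHS (t θ l : ℝ) : ℝ := phiN (θ / (l * t)) / (l * t) * (2 / (Real.pi * (1 + l ^ 2)))

lemma kHS_nonneg {t θ l : ℝ} (ht : 0 < t) (hl : 0 < l) : 0 ≤ kHS t θ l := by
  unfold kHS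
  have := phiN_pos (θ / (l * t))
  positivity

lemma kHS_meas (t : ℝ) : Measurable (fun p : ℝ × ℝ => kHS t p.1 p.2) := by
  unfold kHS
  have := phiN_cont.measurable
  fun_prop

lemma cauchy_integrable : Integrable (fun l : ℝ => 2 / (Real.pi * (1 + l ^ 2))) := by
  have := (integrable_inv_one_add_sq).const_mul (2 / Real.pi)
  refine this.congr (Eventually.of_forall fun x => ?_)
  simp only; field_simp

lemma phiN_mul_abs_le (x : ℝ) : |x| * phiN x ≤ 2 := by
  have h1 := phiN_sq_le x
  have h2 := phiN_le_one x
  have h3 := phiN_pos x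
  have : |x| ≤ (1 + x ^ 2) / 2 := by nlinarith [sq_abs x, sq_nonneg (|x| - 1)]
  nlinarith

lemma kHS_integrable {t θ : ℝ} (ht : 0 < t) (hθ : θ ≠ 0) :
    IntegrableOn (kHS t θ) (Ioi 0) := by
  have hm : Measurable (kHS t θ) := by
    have := phiN_cont.measurable
    unfold kHS
    fun_prop
  have hi : Integrable (fun l : ℝ => (2 / |θ|) * (2 / (Real.pi * (1 + l ^ 2)))) (volume.restrict (Ioi 0)) :=
    (cauchy_integrable.const_mul (2 / |θ|)).integrableOn
  refine Integrable.mono' hi hm.aestronglyMeasurable ?_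
  filter_upwards [ae_restrict_mem measurableSet_Ioi] with l hl
  have hl : 0 < l := hl
  rw [Real.norm_of_nonneg (kHS_nonneg ht hl)]
  unfold kHS
  have h : 0 < |θ| := abs_pos.2 hθ
  refine mul_le_mul_of_nonneg_right ?_ (by positivity)
  have := phiN_mul_abs_le (θ / (l * t))
  rw [abs_div, abs_of_pos (mul_pos hl ht)] at this
  rw [le_div_iff₀ h]
  calc _ = |θ| / (l * t) * phiN (θ / (l * t)) := by ring
    _ ≤ 2 := this

lemma gHS_eq (t θ : ℝ) : gHS t θ = ∫ l in Ioi (0:ℝ), kHS t θ l := rfl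

lemma gHS_nonneg {t : ℝ} (ht : 0 < t) (θ : ℝ) : 0 ≤ gHS t θ := by
  rw [gHS_eq]
  exact setIntegral_nonneg measurableSet_Ioi fun l hl => kHS_nonneg ht hl

lemma gHS_anti {t a b : ℝ} (ht : 0 < t) (ha : a ≠ 0) (hab : |a| ≤ |b|) : gHS t b ≤ gHS t a := by
  have hb : b ≠ 0 := by
    intro h; rw [h, abs_zero] at hab; exact ha (abs_nonpos_iff.1 hab)
  rw [gHS_eq, gHS_eq]
  refine setIntegral_mono_on (kHS_integrable ht hb) (kHS_integrable ht ha) measurableSet_Ioi ?_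
  intro l hl
  have hl : 0 < l := hl
  unfold kHS
  gcongr
  apply phiN_anti
  rw [abs_div, abs_div]
  gcongr

lemma gHS_meas (t : ℝ) : StronglyMeasurable (gHS t) := by
  have : gHS t = fun θ => ∫ l in Ioi (0:ℝ), kHS t θ l := rfl
  rw [this]
  exact ((kHS_meas t).stronglyMeasurable).integral_prod_right

lemma gHS_integrable {t : ℝ} (ht : 0 < t) : Integrable (gHS t) := by
  have key : Integrable (fun p : ℝ × ℝ => kHS t p.1 p.2) (volume.prod (volume.restrict (Ioi 0))) := by
    rw [integrable_prod_iff' (kHS_meas t).aestronglyMeasurable]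
    constructor
    · filter_upwards [ae_restrict_mem measurableSet_Ioi] with l hl
      have hl : 0 < l := hl
      unfold kHS
      exact ((phiN_integrable.comp_div (mul_pos hl ht).ne').div_const _).mul_const _
    · refine (cauchy_integrable.integrableOn (s := Ioi 0)).congr ?_
      filter_upwards [ae_restrict_mem measurableSet_Ioi] with l hl
      have hl : 0 < l := hl
      have h0 : 0 < l * t := mul_pos hl ht
      simp_rw [Real.norm_of_nonneg (kHS_nonneg ht hl)]
      unfold kHS
      rw [integral_mul_const, integral_div, Measure.integral_comp_div (fun x => phiN x), phiN_integral,
        abs_of_pos h0, smul_eq_mul, mul_one, div_self h0.ne', one_mul]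
  exact key.integral_prod_left

lemma gHS_subst {t : ℝ} (ht : 0 < t) (θ : ℝ) :
    gHS t θ = ∫ s in Ioi (0:ℝ), phiN (θ / s) / s * (2 / Real.pi * (t / (t ^ 2 + s ^ 2))) := by
  have := integral_comp_mul_right_Ioi
    (fun s => phiN (θ / s) / s * (2 / Real.pi * (t / (t ^ 2 + s ^ 2)))) 0 ht
  rw [zero_mul, smul_eq_mul, eq_comm, inv_mul_eq_iff_eq_mul₀ ht.ne'] at this
  rw [this, gHS_eq, ← integral_const_mul]
  refine setIntegral_congr_fun measurableSet_Ioi fun l hl => ?_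
  have hl : 0 < l := hl
  unfold kHS
  have := Real.pi_pos
  field_simp

lemma gHS_subst_integrable {t θ : ℝ} (ht : 0 < t) (hθ : θ ≠ 0) :
    IntegrableOn (fun s => phiN (θ / s) / s * (2 / Real.pi * (t / (t ^ 2 + s ^ 2)))) (Ioi 0) := by
  have h := (integrableOn_Ioi_comp_mul_right_iff
    (fun s => phiN (θ / s) / s * (2 / Real.pi * (t / (t ^ 2 + s ^ 2)))) 0 ht)
  rw [zero_mul] at h
  rw [← h]
  have h3 : IntegrableOn (fun l => t⁻¹ * kHS t θ l) (Ioi 0) := (kHS_integrable ht hθ).const_mul (t⁻¹)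
  refine h3.congr_fun ?_ measurableSet_Ioi
  intro l hl
  have hl : 0 < l := hl
  unfold kHS
  have := Real.pi_pos
  field_simp

lemma gHS_ratio {t t' r θ : ℝ} (ht : 0 < t) (ht' : 0 < t') (h1 : t ≤ r * t') (h2 : t' ≤ r * t)
    (hθ : θ ≠ 0) : gHS t θ ≤ r * gHS t' θ := by
  have hr : 0 < r := by
    by_contra h; push Not at h; nlinarith
  rw [gHS_subst ht, gHS_subst ht', ← integral_const_mul]
  refine setIntegral_mono_on (gHS_subst_integrable ht hθ) ((gHS_subst_integrable ht' hθ).const_mul _) measurableSet_Ioi ?_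
  intro s hs
  have hs : 0 < s := hs
  have hp := phiN_pos (θ / s)
  have hpi := Real.pi_pos
  have key : t / (t ^ 2 + s ^ 2) ≤ r * (t' / (t' ^ 2 + s ^ 2)) := by
    rw [← mul_div_assoc, div_le_div_iff₀ (by positivity) (by positivity)]
    nlinarith [mul_le_mul_of_nonneg_right h1 (sq_nonneg s), mul_le_mul_of_nonneg_left h2 (mul_pos ht ht').le]
  calc _ ≤ phiN (θ / s) / s * (2 / Real.pi * (r * (t' / (t' ^ 2 + s ^ 2)))) := by gcongr
    _ = _ := by ring

lemma gHS_le {t θ : ℝ} (ht : 0 < t) (hθ : θ ≠ 0) : gHS t θ ≤ 2 * t / θ ^ 2 := by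
  rw [gHS_subst ht]
  set b := θ ^ 2 / 4 with hb
  have hb0 : 0 < b := by positivity
  have hd : ∀ s ∈ Ioi (0:ℝ), HasDerivAt (fun s : ℝ => -(t / 2) * (s ^ 2 + b)⁻¹) (t * s / (s ^ 2 + b) ^ 2) s := by
    intro s hs
    have h1 : HasDerivAt (fun s : ℝ => s ^ 2 + b) (2 * s) s := by
      simpa using (hasDerivAt_pow 2 s).add_const b
    have h2 := (h1.inv (by positivity : s ^ 2 + b ≠ 0)).const_mul (-(t/2))
    refine h2.congr_deriv ?_
    field_simp
  have hc : ContinuousWithinAt (fun s : ℝ => -(t / 2) * (s ^ 2 + b)⁻¹) (Ici 0) 0 := by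
    apply Continuous.continuousWithinAt
    have : ∀ s : ℝ, s ^ 2 + b ≠ 0 := fun s => by positivity
    fun_prop (disch := assumption)
  have hlim : Tendsto (fun s : ℝ => -(t / 2) * (s ^ 2 + b)⁻¹) atTop (nhds 0) := by
    have h1 : Tendsto (fun s : ℝ => s ^ 2 + b) atTop atTop :=
      tendsto_atTop_add_const_right _ _ (tendsto_pow_atTop (by norm_num))
    simpa using h1.inv_tendsto_atTop.const_mul (-(t/2))
  have hnn : ∀ s ∈ Ioi (0:ℝ), 0 ≤ t * s / (s ^ 2 + b) ^ 2 := by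
    intro s hs
    have hs : 0 < s := hs
    positivity
  have hint := integrableOn_Ioi_deriv_of_nonneg hc hd hnn hlim
  have hval := integral_Ioi_of_hasDerivAt_of_nonneg hc hd hnn hlim
  calc _ ≤ ∫ s in Ioi (0:ℝ), t * s / (s ^ 2 + b) ^ 2 := by
        refine setIntegral_mono_on (gHS_subst_integrable ht hθ) hint measurableSet_Ioi ?_
        intro s hs
        have hs : 0 < s := hs
        have h := phiN_le_quart (θ / s)
        have e : (1 + (θ / s) ^ 2 / 4) = (s ^ 2 + b) / s ^ 2 := by rw [hb]; field_simp
        rw [e, ← le_div_iff₀ (by positivity)] at h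
        have hpi : 2 / Real.pi ≤ 1 := by
          rw [div_le_one Real.pi_pos]; linarith [Real.pi_gt_three]
        have ht2 : t / (t ^ 2 + s ^ 2) ≤ t / s ^ 2 := by
          gcongr; nlinarith
        calc _ ≤ (1 / ((s ^ 2 + b) / s ^ 2) ^ 2) / s * (1 * (t / s ^ 2)) := by gcongr
          _ = _ := by field_simp
    _ = 2 * t / θ ^ 2 := by
        rw [hval, hb]; field_simp; ring

lemma gHS_lower : ∃ c > 0, ∀ t θ : ℝ, 0 < t → θ ≠ 0 → |θ| ≤ t → c / t ≤ gHS t θ := by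
  refine ⟨phiN 1 / 2 * (2 / (Real.pi * 5)), by have := phiN_pos 1; positivity, ?_⟩
  intro t θ ht hθ h
  rw [gHS_eq]
  have hsub : ∫ l in Ioc (1:ℝ) 2, kHS t θ l ≤ ∫ l in Ioi (0:ℝ), kHS t θ l := by
    refine setIntegral_mono_set (kHS_integrable ht hθ) ?_ ?_
    · filter_upwards [ae_restrict_mem measurableSet_Ioi] with l hl using kHS_nonneg ht hl
    · exact Eventually.of_forall fun x hx => lt_trans one_pos hx.1
  refine le_trans ?_ hsub
  have hc : ∫ l in Ioc (1:ℝ) 2, phiN 1 / (2 * t) * (2 / (Real.pi * 5)) = phiN 1 / 2 * (2 / (Real.pi * 5)) / t := by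
    simp; norm_num; field_simp
  rw [← hc]
  refine setIntegral_mono_on (integrableOn_const (by simp)) ((kHS_integrable ht hθ).mono_set fun x hx => lt_trans one_pos hx.1) measurableSet_Ioc ?_
  intro l hl
  have hl0 : 0 < l := lt_trans one_pos hl.1
  have := phiN_pos 1
  unfold kHS
  have h1 : phiN 1 ≤ phiN (θ / (l * t)) := by
    apply phiN_anti
    rw [abs_div, abs_of_pos (mul_pos hl0 ht), abs_one, div_le_one (by positivity)]
    nlinarith [hl.1]
  have h5 : 1 + l ^ 2 ≤ 5 := by nlinarith [hl.1, hl.2]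
  have h6 : l ≤ 2 := hl.2
  have h7 : 0 ≤ phiN (θ / (l * t)) / (l * t) := (div_pos (phiN_pos _) (by positivity)).le
  have h8 := (phiN_pos (θ / (l * t))).le
  gcongr

lemma postDens_nonneg {t : ℝ} (ht : 0 < t) (y θ : ℝ) : 0 ≤ postDens t y θ :=
  mul_nonneg (phiN_pos _).le (gHS_nonneg ht θ)

lemma phiN_shift_sq (y θ : ℝ) : θ ^ 2 * phiN (y - θ) ≤ 2 * y ^ 2 + 4 := by
  have h1 := phiN_sq_le (y - θ)
  have h2 := phiN_le_one (y - θ)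
  have h3 := phiN_pos (y - θ)
  have : θ ^ 2 ≤ 2 * y ^ 2 + 2 * (y - θ) ^ 2 := by nlinarith [sq_nonneg (2 * y - θ)]
  have h4 : θ ^ 2 * phiN (y - θ) ≤ (2 * y ^ 2 + 2 * (y - θ) ^ 2) * phiN (y - θ) := by gcongr
  nlinarith [mul_le_mul_of_nonneg_left h2 (sq_nonneg y)]

lemma postDens_int2 {t : ℝ} (ht : 0 < t) (y : ℝ) : Integrable (fun θ => θ ^ 2 * postDens t y θ) := by
  have : Integrable (fun θ => (θ ^ 2 * phiN (y - θ)) * gHS t θ) := by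
    refine (gHS_integrable ht).bdd_mul (c := 2 * y ^ 2 + 4) ?_ ?_
    · have := phiN_cont
      exact Continuous.aestronglyMeasurable (by fun_prop)
    · refine Eventually.of_forall fun θ => ?_
      rw [Real.norm_of_nonneg (mul_nonneg (sq_nonneg _) (phiN_pos _).le)]
      exact phiN_shift_sq y θ
  refine this.congr (Eventually.of_forall fun θ => ?_)
  simp only [postDens]; ring

lemma postDens_int0 {t : ℝ} (ht : 0 < t) (y : ℝ) : Integrable (postDens t y) := by
  refine (gHS_integrable ht).bdd_mul (c := 1) ?_ ?_
  · have := phiN_cont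
    exact Continuous.aestronglyMeasurable (by fun_prop)
  · refine Eventually.of_forall fun θ => ?_
    rw [Real.norm_of_nonneg (phiN_pos _).le]
    exact phiN_le_one _

lemma postDens_int1 {t : ℝ} (ht : 0 < t) (y : ℝ) : Integrable (fun θ => θ * postDens t y θ) := by
  have hm : AEStronglyMeasurable (fun θ => θ * postDens t y θ) :=
    continuous_id.aestronglyMeasurable.mul (postDens_int0 ht y).1
  refine ((postDens_int0 ht y).add (postDens_int2 ht y)).mono' hm ?_
  refine Eventually.of_forall fun θ => ?_
  have := postDens_nonneg ht y θ
  rw [norm_mul, Real.norm_of_nonneg this, Real.norm_eq_abs]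
  simp only [Pi.add_apply]
  have h : |θ| ≤ 1 + θ ^ 2 := by nlinarith [sq_abs θ, sq_nonneg (|θ| - 1), abs_nonneg θ]
  nlinarith

lemma postDens_quad {t : ℝ} (ht : 0 < t) (y c : ℝ) :
    Integrable (fun θ => (θ - c) ^ 2 * postDens t y θ) ∧
    ∫ θ, (θ - c) ^ 2 * postDens t y θ = (∫ θ, θ ^ 2 * postDens t y θ)
      - 2 * c * (∫ θ, θ * postDens t y θ) + c ^ 2 * margDens t y := by
  have h0 := (postDens_int0 ht y).const_mul (c ^ 2)
  have h1 := (postDens_int1 ht y).const_mul (2 * c)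
  have h2 := postDens_int2 ht y
  have e : (fun θ => (θ - c) ^ 2 * postDens t y θ) =
      fun θ => (θ ^ 2 * postDens t y θ - 2 * c * (θ * postDens t y θ)) + c ^ 2 * postDens t y θ := by
    ext θ; ring
  rw [e]
  refine ⟨(h2.sub h1).add h0, ?_⟩
  have e1 := integral_add (h2.sub h1) h0
  simp only [Pi.sub_apply] at e1
  rw [e1, integral_sub h2 h1, integral_const_mul, integral_const_mul]
  rfl

lemma marg_lower : ∃ c > 0, ∀ t y : ℝ, 0 < t → t ≤ 1 → c * phiN y ≤ margDens t y := by
  obtain ⟨c, hc, hg⟩ := gHS_lower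
  refine ⟨Real.exp (-1/2) * c, by positivity, ?_⟩
  intro t y ht ht1
  have key : ∀ S : Set ℝ, MeasurableSet S → volume S = ENNReal.ofReal t →
      (∀ θ ∈ S, θ ≠ 0 ∧ |θ| ≤ t ∧ 0 ≤ y * θ) → Real.exp (-1/2) * c * phiN y ≤ margDens t y := by
    intro S hS hv hh
    have h1 : ∫ θ in S, postDens t y θ ≤ margDens t y :=
      setIntegral_le_integral (postDens_int0 ht y) (Eventually.of_forall fun θ => postDens_nonneg ht y θ)
    refine le_trans ?_ h1
    have h2 : ∫ θ in S, Real.exp (-1/2) * phiN y * (c / t) = Real.exp (-1/2) * c * phiN y := by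
      rw [setIntegral_const, measureReal_def, hv, ENNReal.toReal_ofReal ht.le, smul_eq_mul]
      field_simp
    rw [← h2]
    refine setIntegral_mono_on (integrableOn_const (by rw [hv]; simp)) (postDens_int0 ht y).integrableOn hS ?_
    intro θ hθ
    obtain ⟨a, b, d⟩ := hh θ hθ
    unfold postDens
    have hp : Real.exp (-1/2) * phiN y ≤ phiN (y - θ) := by
      unfold phiN
      rw [mul_left_comm, ← Real.exp_add]
      gcongr
      have : θ ^ 2 ≤ 1 := by rw [← sq_abs]; nlinarith [abs_nonneg θ]
      nlinarith
    have := phiN_pos y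
    have := (phiN_pos (y - θ)).le
    have := hg t θ ht a b
    gcongr
  rcases le_total 0 y with hy | hy
  · refine key (Ioc 0 t) measurableSet_Ioc (by simp) ?_
    intro θ hθ
    exact ⟨hθ.1.ne', by rw [abs_of_pos hθ.1]; exact hθ.2, mul_nonneg hy hθ.1.le⟩
  · refine key (Ico (-t) 0) measurableSet_Ico (by simp) ?_
    intro θ hθ
    exact ⟨hθ.2.ne, by rw [abs_of_neg hθ.2]; linarith [hθ.1], mul_nonneg_of_nonpos_of_nonpos hy hθ.2.le⟩

lemma marg_pos {t : ℝ} (ht : 0 < t) (ht1 : t ≤ 1) (y : ℝ) : 0 < margDens t y := by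
  obtain ⟨c, hc, h⟩ := marg_lower
  exact lt_of_lt_of_le (mul_pos hc (phiN_pos y)) (h t y ht ht1)

lemma postVar_le {t : ℝ} (ht : 0 < t) (ht1 : t ≤ 1) (y c : ℝ) :
    postVar t y ≤ (∫ θ, (θ - c) ^ 2 * postDens t y θ) / margDens t y := by
  have hm := marg_pos ht ht1 y
  unfold postVar
  refine div_le_div_of_nonneg_right ?_ hm.le
  rw [(postDens_quad ht y _).2, (postDens_quad ht y _).2]
  have : (∫ θ, θ * postDens t y θ) = postMean t y * margDens t y := by
    unfold postMean; field_simp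
  rw [this]
  nlinarith [mul_nonneg hm.le (sq_nonneg (c - postMean t y))]

lemma postVar_nonneg {t : ℝ} (ht : 0 < t) (y : ℝ) : 0 ≤ postVar t y :=
  div_nonneg (integral_nonneg fun θ => mul_nonneg (sq_nonneg _) (postDens_nonneg ht y θ))
    (integral_nonneg fun θ => postDens_nonneg ht y θ)

lemma ae_ne_zero : ∀ᵐ θ : ℝ, θ ≠ 0 := by
  simp [ae_iff]

lemma int_ratio {t t' r y : ℝ} (ht : 0 < t) (ht' : 0 < t') (h1 : t ≤ r * t') (h2 : t' ≤ r * t)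
    (f : ℝ → ℝ) (hf : ∀ θ, 0 ≤ f θ) (hi : Integrable fun θ => f θ * postDens t y θ)
    (hi' : Integrable fun θ => f θ * postDens t' y θ) :
    ∫ θ, f θ * postDens t y θ ≤ r * ∫ θ, f θ * postDens t' y θ := by
  rw [← integral_const_mul]
  refine integral_mono_ae hi (hi'.const_mul r) ?_
  filter_upwards [ae_ne_zero] with θ hθ
  have := gHS_ratio ht ht' h1 h2 hθ
  unfold postDens
  calc f θ * (phiN (y - θ) * gHS t θ) ≤ f θ * (phiN (y - θ) * (r * gHS t' θ)) := by
        have := hf θ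
        have := (phiN_pos (y - θ)).le
        gcongr
    _ = _ := by ring

lemma postVar_ratio {t t' r : ℝ} (ht : 0 < t) (ht' : 0 < t') (ht1 : t ≤ 1) (ht1' : t' ≤ 1)
    (h1 : t ≤ r * t') (h2 : t' ≤ r * t) (y : ℝ) : postVar t y ≤ r ^ 2 * postVar t' y := by
  have hr : 0 < r := by
    by_contra h; push Not at h; nlinarith
  refine (postVar_le ht ht1 y (postMean t' y)).trans ?_
  have hm := marg_pos ht ht1 y
  have hm' := marg_pos ht' ht1' y
  have a := int_ratio ht ht' h1 h2 (fun θ => (θ - postMean t' y) ^ 2) (fun _ => sq_nonneg _)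
    (postDens_quad ht y _).1 (postDens_quad ht' y _).1
  have b := int_ratio ht' ht h2 h1 (y := y) (fun θ => 1) (fun _ => zero_le_one)
    (by simpa using postDens_int0 ht' y) (by simpa using postDens_int0 ht y)
  simp only [one_mul] at b
  change margDens t' y ≤ r * margDens t y at b
  unfold postVar
  have hn : 0 ≤ ∫ θ, (θ - postMean t' y) ^ 2 * postDens t' y θ :=
    integral_nonneg fun θ => mul_nonneg (sq_nonneg _) (postDens_nonneg ht' y θ)
  rw [div_le_iff₀ hm]
  calc _ ≤ r * ∫ θ, (θ - postMean t' y) ^ 2 * postDens t' y θ := a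
    _ = r * ((∫ θ, (θ - postMean t' y) ^ 2 * postDens t' y θ) / margDens t' y) * margDens t' y := by
        field_simp
    _ ≤ r * ((∫ θ, (θ - postMean t' y) ^ 2 * postDens t' y θ) / margDens t' y) * (r * margDens t y) := by
        gcongr
    _ = _ := by ring

lemma phiN_shift_integral (y : ℝ) : Integrable (fun θ => phiN (y - θ)) ∧ ∫ θ, phiN (y - θ) = 1 :=
  ⟨phiN_integrable.comp_sub_left y, by rw [integral_sub_left_eq_self phiN]; exact phiN_integral⟩

/-- Bounds on posterior variance. -/
lemma postVar_bounds : ∃ K ≥ 1, ∀ t y : ℝ, 0 < t → t ≤ 1 →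
    postVar t y ≤ K * t * Real.exp (y ^ 2 / 2) ∧ postVar t y ≤ K * (1 + y ^ 2) := by
  obtain ⟨c, hc, hm⟩ := marg_lower
  set s := Real.sqrt (2 * Real.pi) with hs
  have hs0 : 0 < s := by positivity
  set c2 := ∫ x, x ^ 2 * phiN x with hc2
  have hc20 : 0 ≤ c2 := integral_nonneg fun x => mul_nonneg (sq_nonneg _) (phiN_pos x).le
  have hp1 := phiN_pos 1
  refine ⟨1 + 2 * s / c + (2 + (2 + 2 * c2) / phiN 1), ?_, ?_⟩
  · have : 0 ≤ 2 * s / c := by positivity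
    have : 0 ≤ (2 + 2 * c2) / phiN 1 := by positivity
    linarith
  intro t y ht ht1
  have hmp := marg_pos ht ht1 y
  have hv := postVar_le ht ht1 y 0
  simp only [sub_zero] at hv
  constructor
  · have hnum : ∫ θ, θ ^ 2 * postDens t y θ ≤ 2 * t := by
      have : ∫ θ, 2 * t * phiN (y - θ) = 2 * t := by
        rw [integral_const_mul, (phiN_shift_integral y).2, mul_one]
      rw [← this]
      refine integral_mono_ae (postDens_int2 ht y) ((phiN_shift_integral y).1.const_mul _) ?_
      filter_upwards [ae_ne_zero] with θ hθ
      have h := gHS_le ht hθ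
      rw [le_div_iff₀ (by positivity)] at h
      unfold postDens
      have := (phiN_pos (y - θ)).le
      nlinarith
    have h1 : postVar t y ≤ 2 * t / (c * phiN y) := by
      refine hv.trans ?_
      have := phiN_pos y
      gcongr
      exact hm t y ht ht1
    refine h1.trans ?_
    have : 2 * t / (c * phiN y) = (2 * s / c) * t * Real.exp (y ^ 2 / 2) := by
      unfold phiN
      rw [neg_div, Real.exp_neg, ← hs]
      field_simp
    rw [this]
    gcongr
    have : 0 ≤ (2 + 2 * c2) / phiN 1 := by positivity
    linarith
  · set R := |y| + 1 with hR
    have hR0 : 0 < R := by positivity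
    have hgR := gHS_nonneg ht R
    have hint2 : Integrable (fun θ => 2 * y ^ 2 * phiN (y - θ) + 2 * ((y - θ) ^ 2 * phiN (y - θ))) :=
      ((phiN_shift_integral y).1.const_mul _).add
        ((phiN_sq_integrable.comp_sub_left y).const_mul 2)
    have hval2 : ∫ θ, (2 * y ^ 2 * phiN (y - θ) + 2 * ((y - θ) ^ 2 * phiN (y - θ))) = 2 * y ^ 2 + 2 * c2 := by
      rw [integral_add ((phiN_shift_integral y).1.const_mul _)
        ((phiN_sq_integrable.comp_sub_left y).const_mul 2), integral_const_mul, integral_const_mul,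
        (phiN_shift_integral y).2, integral_sub_left_eq_self (fun x => x ^ 2 * phiN x)]
      ring
    have hnum : ∫ θ, θ ^ 2 * postDens t y θ ≤ R ^ 2 * margDens t y + gHS t R * (2 * y ^ 2 + 2 * c2) := by
      rw [← hval2, margDens, ← integral_const_mul, ← integral_const_mul,
        ← integral_add ((postDens_int0 ht y).const_mul _) (hint2.const_mul _)]
      refine integral_mono_ae (postDens_int2 ht y) (((postDens_int0 ht y).const_mul _).add (hint2.const_mul _)) ?_
      filter_upwards [ae_ne_zero] with θ hθ
      have hpn := (phiN_pos (y - θ)).le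
      have hq : θ ^ 2 ≤ 2 * y ^ 2 + 2 * (y - θ) ^ 2 := by nlinarith [sq_nonneg (2 * y - θ)]
      rcases le_total |θ| R with h | h
      · have h3 : θ ^ 2 ≤ R ^ 2 := by rw [← sq_abs θ]; gcongr
        have h4 : θ ^ 2 * postDens t y θ ≤ R ^ 2 * postDens t y θ := by
          have := postDens_nonneg ht y θ
          gcongr
        have h5 : 0 ≤ gHS t R * (2 * y ^ 2 * phiN (y - θ) + 2 * ((y - θ) ^ 2 * phiN (y - θ))) := by
          positivity
        linarith
      · have h3 : gHS t θ ≤ gHS t R := gHS_anti ht hR0.ne' (by rwa [abs_of_pos hR0])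
        have h4 : θ ^ 2 * postDens t y θ ≤ (2 * y ^ 2 + 2 * (y - θ) ^ 2) * (phiN (y - θ) * gHS t R) := by
          unfold postDens
          gcongr
          exact mul_nonneg hpn (gHS_nonneg ht θ)
        have h5 : 0 ≤ R ^ 2 * postDens t y θ := mul_nonneg (sq_nonneg _) (postDens_nonneg ht y θ)
        linarith
    have hden : phiN 1 * gHS t R ≤ margDens t y := by
      have h1 : ∫ θ in Ioc y (y + 1), postDens t y θ ≤ margDens t y :=
        setIntegral_le_integral (postDens_int0 ht y) (Eventually.of_forall fun θ => postDens_nonneg ht y θ)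
      refine le_trans ?_ h1
      have h2 : ∫ θ in Ioc y (y + 1), phiN 1 * gHS t R = phiN 1 * gHS t R := by
        simp
      rw [← h2]
      refine setIntegral_mono_on_ae (integrableOn_const (by simp)) (postDens_int0 ht y).integrableOn measurableSet_Ioc ?_
      filter_upwards [ae_ne_zero] with θ hθ hθ2
      have ha : phiN 1 ≤ phiN (y - θ) := by
        apply phiN_anti
        rw [abs_one, abs_le]; constructor <;> linarith [hθ2.1, hθ2.2]
      have hb : gHS t R ≤ gHS t θ := by
        apply gHS_anti ht hθ
        rw [abs_of_pos hR0, hR, abs_le]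
        have := neg_abs_le y
        have := le_abs_self y
        constructor <;> linarith [hθ2.1, hθ2.2]
      unfold postDens
      have := (phiN_pos (y - θ)).le
      gcongr
    have hfin : postVar t y ≤ R ^ 2 + (2 * y ^ 2 + 2 * c2) / phiN 1 := by
      refine hv.trans ?_
      rw [div_le_iff₀ hmp]
      have : gHS t R * (2 * y ^ 2 + 2 * c2) ≤ (2 * y ^ 2 + 2 * c2) / phiN 1 * margDens t y := by
        calc _ = (2 * y ^ 2 + 2 * c2) / phiN 1 * (phiN 1 * gHS t R) := by field_simp
          _ ≤ _ := by gcongr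
      linarith
    refine hfin.trans ?_
    have e1 : R ^ 2 ≤ 2 * (1 + y ^ 2) := by
      rw [hR]; nlinarith [sq_abs y, sq_nonneg (|y| - 1)]
    have e2 : (2 * y ^ 2 + 2 * c2) / phiN 1 ≤ (2 + 2 * c2) / phiN 1 * (1 + y ^ 2) := by
      rw [div_mul_eq_mul_div]
      gcongr
      nlinarith [mul_nonneg hc20 (sq_nonneg y)]
    have e3 : 0 ≤ (1 + 2 * s / c) * (1 + y ^ 2) := by positivity
    linarith

lemma postVar_meas (t : ℝ) : Measurable (postVar t) := by
  have hphi := phiN_cont.measurable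
  have hg := (gHS_meas t).measurable
  have hD : Measurable (fun p : ℝ × ℝ => postDens t p.1 p.2) := by
    unfold postDens; fun_prop
  have hM : Measurable (margDens t) := by
    have := (hD.stronglyMeasurable).integral_prod_right' (ν := volume)
    exact this.measurable
  have h1 : Measurable (postMean t) := by
    have : Measurable (fun p : ℝ × ℝ => p.2 * postDens t p.1 p.2) := by fun_prop
    exact ((this.stronglyMeasurable).integral_prod_right' (ν := volume)).measurable.div hM
  have h2 : Measurable (fun p : ℝ × ℝ => (p.2 - postMean t p.1) ^ 2 * postDens t p.1 p.2) := by fun_prop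
  exact ((h2.stronglyMeasurable).integral_prod_right' (ν := volume)).measurable.div hM

lemma split_bound (w p q : ℝ → ℝ) (T : ℝ) (hT : 0 < T) (hw : ∀ x, 0 ≤ w x)
    (h1 : ∀ x, |x| ≤ T → w x ≤ p |x|) (h2 : ∀ x, T < |x| → w x ≤ q |x|)
    (hp : IntegrableOn p (Ioc 0 T)) (hq : IntegrableOn q (Ioi T)) :
    ∫ x, w x ≤ 2 * ((∫ x in Ioc 0 T, p x) + ∫ x in Ioi T, q x) := by
  classical
  set h : ℝ → ℝ := fun x => if x ≤ T then p x else q x with hh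
  have hu : Ioc 0 T ∪ Ioi T = Ioi 0 := Ioc_union_Ioi_eq_Ioi hT.le
  have hd : Disjoint (Ioc 0 T) (Ioi T) := by
    rw [Set.disjoint_left]; intro x hx hx'; exact absurd hx.2 (not_le.2 hx')
  have ep : EqOn p h (Ioc 0 T) := fun x hx => by simp [hh, hx.2]
  have eq : EqOn q h (Ioi T) := fun x hx => by
    have : ¬ x ≤ T := not_le.2 hx
    simp [hh, this]
  have hp' : IntegrableOn h (Ioc 0 T) := hp.congr_fun ep measurableSet_Ioc
  have hq' : IntegrableOn h (Ioi T) := hq.congr_fun eq measurableSet_Ioi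
  have hi : IntegrableOn h (Ioi 0) := by rw [← hu]; exact hp'.union hq'
  have hv : ∫ x in Ioi 0, h x = (∫ x in Ioc 0 T, p x) + ∫ x in Ioi T, q x := by
    rw [← hu, setIntegral_union hd measurableSet_Ioi hp' hq',
      setIntegral_congr_fun measurableSet_Ioc ep, setIntegral_congr_fun measurableSet_Ioi eq]
  have hia : Integrable (fun x => h |x|) := by
    rw [← integrableOn_univ, ← Iic_union_Ioi (a := (0:ℝ))]
    refine IntegrableOn.union ?_ ?_
    · rw [integrableOn_Iic_iff_integrableOn_Iio]
      have := ((Measure.measurePreserving_neg (volume : Measure ℝ)).integrableOn_comp_preimage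
        (MeasurableEquiv.neg ℝ).measurableEmbedding (f := h) (s := Ioi 0)).2 hi
      have e : (Neg.neg : ℝ → ℝ) ⁻¹' (Ioi 0) = Iio 0 := by ext x; simp
      rw [e] at this
      refine this.congr_fun ?_ measurableSet_Iio
      intro x hx
      simp [abs_of_neg (show x < 0 from hx)]
    · refine hi.congr_fun ?_ measurableSet_Ioi
      intro x hx
      simp [abs_of_pos (show 0 < x from hx)]
  rw [← hv, ← integral_comp_abs]
  refine integral_mono_of_nonneg (Eventually.of_forall hw) hia (Eventually.of_forall fun x => ?_)
  simp only [hh]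
  split_ifs with hx
  · exact h1 x hx
  · exact h2 x (not_le.1 hx)

lemma pow_exp_tendsto (n : ℕ) : Tendsto (fun x : ℝ => x ^ n * Real.exp (-(x ^ 2) / 2)) atTop (nhds 0) := by
  refine squeeze_zero' ?_ ?_ (Real.tendsto_pow_mul_exp_neg_atTop_nhds_zero n)
  · filter_upwards [eventually_ge_atTop 0] with x hx
    positivity
  · filter_upwards [eventually_ge_atTop 2] with x hx
    gcongr
    nlinarith

lemma exp_sq_deriv (x : ℝ) : HasDerivAt (fun x : ℝ => Real.exp (-(x ^ 2) / 2)) (-x * Real.exp (-(x ^ 2) / 2)) x := by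
  have h : HasDerivAt (fun x : ℝ => -(x ^ 2) / 2) (-x) x := by
    refine ((hasDerivAt_pow 2 x).neg.div_const 2).congr_deriv ?_
    norm_num
    ring
  exact h.exp.congr_deriv (by ring)

lemma tail1 (T : ℝ) (hT : 2 ≤ T) : IntegrableOn (fun x : ℝ => (x ^ 2 - 1) * Real.exp (-(x ^ 2) / 2)) (Ioi T) ∧
    ∫ x in Ioi T, (x ^ 2 - 1) * Real.exp (-(x ^ 2) / 2) = T * Real.exp (-(T ^ 2) / 2) := by
  have hd : ∀ x ∈ Ioi T, HasDerivAt (fun x : ℝ => -(x * Real.exp (-(x ^ 2) / 2)))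
      ((x ^ 2 - 1) * Real.exp (-(x ^ 2) / 2)) x := by
    intro x _
    exact (((hasDerivAt_id x).mul (exp_sq_deriv x)).neg).congr_deriv (by simp only [id]; ring)
  have hc : ContinuousWithinAt (fun x : ℝ => -(x * Real.exp (-(x ^ 2) / 2))) (Ici T) T :=
    Continuous.continuousWithinAt (by fun_prop)
  have hl : Tendsto (fun x : ℝ => -(x * Real.exp (-(x ^ 2) / 2))) atTop (nhds 0) := by
    simpa using (pow_exp_tendsto 1).neg
  have hnn : ∀ x ∈ Ioi T, 0 ≤ (x ^ 2 - 1) * Real.exp (-(x ^ 2) / 2) := by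
    intro x hx
    have hx : T < x := hx
    exact mul_nonneg (by nlinarith) (Real.exp_pos _).le
  refine ⟨integrableOn_Ioi_deriv_of_nonneg hc hd hnn hl, ?_⟩
  rw [integral_Ioi_of_hasDerivAt_of_nonneg hc hd hnn hl]; ring

lemma tail2 (T : ℝ) (hT : 2 ≤ T) : IntegrableOn (fun x : ℝ => (x ^ 4 - 3) * Real.exp (-(x ^ 2) / 2)) (Ioi T) ∧
    ∫ x in Ioi T, (x ^ 4 - 3) * Real.exp (-(x ^ 2) / 2) = (T ^ 3 + 3 * T) * Real.exp (-(T ^ 2) / 2) := by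
  have hd : ∀ x ∈ Ioi T, HasDerivAt (fun x : ℝ => -((x ^ 3 + 3 * x) * Real.exp (-(x ^ 2) / 2)))
      ((x ^ 4 - 3) * Real.exp (-(x ^ 2) / 2)) x := by
    intro x _
    have := (hasDerivAt_pow 3 x).add ((hasDerivAt_id x).const_mul 3)
    refine ((this.mul (exp_sq_deriv x)).neg).congr_deriv ?_
    simp
    ring
  have hc : ContinuousWithinAt (fun x : ℝ => -((x ^ 3 + 3 * x) * Real.exp (-(x ^ 2) / 2))) (Ici T) T :=
    Continuous.continuousWithinAt (by fun_prop)
  have hl : Tendsto (fun x : ℝ => -((x ^ 3 + 3 * x) * Real.exp (-(x ^ 2) / 2))) atTop (nhds 0) := by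
    have := ((pow_exp_tendsto 3).add ((pow_exp_tendsto 1).const_mul 3)).neg
    simp only [mul_zero, add_zero, neg_zero] at this
    refine this.congr fun x => ?_
    ring
  have hnn : ∀ x ∈ Ioi T, 0 ≤ (x ^ 4 - 3) * Real.exp (-(x ^ 2) / 2) := by
    intro x hx
    have hx : T < x := hx
    have : 4 ≤ x ^ 2 := by nlinarith
    exact mul_nonneg (by nlinarith) (Real.exp_pos _).le
  refine ⟨integrableOn_Ioi_deriv_of_nonneg hc hd hnn hl, ?_⟩
  rw [integral_Ioi_of_hasDerivAt_of_nonneg hc hd hnn hl]; ring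

lemma gauss_eq (f : ℝ → ℝ) : ∫ y, f y ∂(gaussianReal 0 1) = ∫ y, phiN y * f y := by
  rw [integral_gaussianReal_eq_integral_smul (by norm_num)]
  congr 1; ext x
  simp [phiN, gaussianPDFReal]

lemma L1_bound (v : ℝ → ℝ) (A K T : ℝ) (hK : 0 ≤ K) (hT : 2 ≤ T) (hv : ∀ y, 0 ≤ v y)
    (h1 : ∀ y, v y ≤ A * Real.exp (y ^ 2 / 2)) (h2 : ∀ y, v y ≤ K * (1 + y ^ 2)) :
    ∫ y, v y ∂(gaussianReal 0 1) ≤ 2 * A * T + 4 * K * T * Real.exp (-(T ^ 2) / 2) := by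
  rw [gauss_eq]
  refine (split_bound _ (fun _ => A) (fun x => 2 * K * ((x ^ 2 - 1) * Real.exp (-(x ^ 2) / 2))) T
    (by linarith) (fun x => mul_nonneg (phiN_pos x).le (hv x)) ?_ ?_ (integrableOn_const (by simp))
    ((tail1 T hT).1.const_mul (2 * K))).trans ?_
  · intro x _
    calc phiN x * v x ≤ Real.exp (-(x ^ 2) / 2) * (A * Real.exp (x ^ 2 / 2)) :=
          mul_le_mul (phiN_le_exp x) (h1 x) (hv x) (Real.exp_pos _).le
      _ = A * Real.exp (-(x ^ 2) / 2 + x ^ 2 / 2) := by rw [Real.exp_add]; ring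
      _ = A := by rw [neg_div, neg_add_cancel, Real.exp_zero, mul_one]
  · intro x hx
    have hx2 : 4 ≤ |x| ^ 2 := by nlinarith
    rw [sq_abs] at hx2 ⊢
    calc phiN x * v x ≤ Real.exp (-(x ^ 2) / 2) * (K * (1 + x ^ 2)) :=
          mul_le_mul (phiN_le_exp x) (h2 x) (hv x) (Real.exp_pos _).le
      _ ≤ Real.exp (-(x ^ 2) / 2) * (K * (2 * (x ^ 2 - 1))) := by gcongr; linarith
      _ = _ := by ring
  · rw [integral_const_mul, (tail1 T hT).2, setIntegral_const, measureReal_def, Real.volume_Ioc, sub_zero,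
      ENNReal.toReal_ofReal (by linarith), smul_eq_mul]
    apply le_of_eq; ring

lemma int_exp (T : ℝ) (hT : 0 < T) : ∫ x in Ioc 0 T, Real.exp (T / 2 * x) ≤ 2 / T * Real.exp (T ^ 2 / 2) := by
  rw [← intervalIntegral.integral_of_le hT.le]
  have hd : ∀ x ∈ uIcc 0 T, HasDerivAt (fun x => 2 / T * Real.exp (T / 2 * x)) (Real.exp (T / 2 * x)) x := by
    intro x _
    have h : HasDerivAt (fun x : ℝ => T / 2 * x) (T / 2) x := by
      simpa using (hasDerivAt_id x).const_mul (T / 2)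
    refine (h.exp.const_mul (2 / T)).congr_deriv ?_
    field_simp
  rw [intervalIntegral.integral_eq_sub_of_hasDerivAt hd
    (Continuous.intervalIntegrable (by fun_prop) _ _)]
  have : T / 2 * T = T ^ 2 / 2 := by ring
  rw [this]
  have : 0 ≤ 2 / T * Real.exp (T / 2 * 0) := by positivity
  linarith

lemma L2_bound (v : ℝ → ℝ) (A K T : ℝ) (hT : 2 ≤ T) (hv : ∀ y, 0 ≤ v y)
    (h1 : ∀ y, v y ≤ A * Real.exp (y ^ 2 / 2)) (h2 : ∀ y, v y ≤ K * (1 + y ^ 2)) :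
    ∫ y, (v y) ^ 2 ∂(gaussianReal 0 1) ≤
      4 * A ^ 2 / T * Real.exp (T ^ 2 / 2) + 32 * K ^ 2 * T ^ 3 * Real.exp (-(T ^ 2) / 2) := by
  rw [gauss_eq]
  have hT0 : 0 < T := by linarith
  refine (split_bound _ (fun x => A ^ 2 * Real.exp (T / 2 * x))
    (fun x => 4 * K ^ 2 * ((x ^ 4 - 3) * Real.exp (-(x ^ 2) / 2))) T
    hT0 (fun x => mul_nonneg (phiN_pos x).le (sq_nonneg _)) ?_ ?_
    ((Continuous.integrableOn_Icc (by fun_prop)).mono_set Ioc_subset_Icc_self)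
    ((tail2 T hT).1.const_mul (4 * K ^ 2))).trans ?_
  · intro x hx
    calc phiN x * v x ^ 2 ≤ Real.exp (-(x ^ 2) / 2) * (A * Real.exp (x ^ 2 / 2)) ^ 2 :=
          mul_le_mul (phiN_le_exp x) (pow_le_pow_left₀ (hv x) (h1 x) 2) (sq_nonneg _) (Real.exp_pos _).le
      _ = A ^ 2 * Real.exp (-(x ^ 2) / 2 + x ^ 2 / 2 + x ^ 2 / 2) := by
          rw [Real.exp_add, Real.exp_add]; ring
      _ ≤ A ^ 2 * Real.exp (T / 2 * |x|) := by
          gcongr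
          rw [← sq_abs]
          nlinarith [abs_nonneg x]
  · intro x hx
    have hx2 : 4 ≤ |x| ^ 2 := by nlinarith
    have e4 : |x| ^ 4 = x ^ 4 := by
      rw [show |x| ^ 4 = (|x| ^ 2) ^ 2 by ring, sq_abs]; ring
    rw [e4, sq_abs]
    rw [sq_abs] at hx2
    calc phiN x * v x ^ 2 ≤ Real.exp (-(x ^ 2) / 2) * (K * (1 + x ^ 2)) ^ 2 :=
          mul_le_mul (phiN_le_exp x) (pow_le_pow_left₀ (hv x) (h2 x) 2) (sq_nonneg _) (Real.exp_pos _).le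
      _ = Real.exp (-(x ^ 2) / 2) * (K ^ 2 * (1 + x ^ 2) ^ 2) := by ring
      _ ≤ Real.exp (-(x ^ 2) / 2) * (K ^ 2 * (4 * (x ^ 4 - 3))) := by gcongr; nlinarith
      _ = _ := by ring
  · rw [integral_const_mul, integral_const_mul, (tail2 T hT).2]
    have h3 := int_exp T hT0
    have h4 : T ^ 3 + 3 * T ≤ 4 * T ^ 3 := by nlinarith [mul_pos hT0 hT0]
    calc _ ≤ 2 * (A ^ 2 * (2 / T * Real.exp (T ^ 2 / 2)) + 4 * K ^ 2 * ((4 * T ^ 3) * Real.exp (-(T ^ 2) / 2))) := by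
          gcongr
      _ = _ := by ring

lemma zet_sq {τ : ℝ} (h0 : 0 < τ) (h1 : τ ≤ 1) : zet τ ^ 2 / 2 = -Real.log τ := by
  unfold zet
  rw [Real.sq_sqrt]
  · rw [one_div, Real.log_inv]; ring
  · rw [one_div, Real.log_inv]; have := Real.log_nonpos h0.le h1; linarith

/-- Moment bounds. -/
lemma moment_bounds (B : ℝ) (hB : 0 < B) : ∃ M > 0, ∀ τ t : ℝ, 0 < τ → τ ≤ 1 → 2 ≤ zet τ → 0 < t → t ≤ 1 → t ≤ B * τ →
    ∫ y, postVar t y ∂(gaussianReal 0 1) ≤ M * (τ * zet τ) ∧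
    ∫ y, postVar t y ^ 2 ∂(gaussianReal 0 1) ≤ M * (τ * zet τ) := by
  obtain ⟨K, hK1, hK⟩ := postVar_bounds
  have hK0 : 0 < K := by linarith
  refine ⟨(2 * (K * B) + 4 * K) + (4 * (K * B) ^ 2 + 32 * K ^ 2 * 27), by positivity, ?_⟩
  intro τ t hτ hτ1 hz ht ht1 htB
  have hv := fun y => postVar_nonneg ht y
  have h1 : ∀ y, postVar t y ≤ (K * B * τ) * Real.exp (y ^ 2 / 2) := by
    intro y
    refine (hK t y ht ht1).1.trans ?_
    rw [mul_assoc K B]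
    gcongr
  have h2 := fun y => (hK t y ht ht1).2
  have hzsq := zet_sq hτ hτ1
  set z := zet τ with hzdef
  have hz0 : 0 < z := by linarith
  have hexp : Real.exp (z ^ 2 / 2) = τ⁻¹ := by rw [hzsq, Real.exp_neg, Real.exp_log hτ]
  have hexpn : Real.exp (-(z ^ 2) / 2) = τ := by rw [neg_div, hzsq, neg_neg, Real.exp_log hτ]
  constructor
  · refine (L1_bound _ _ _ z hK0.le hz hv h1 h2).trans ?_
    rw [hexpn]
    have : 0 ≤ (4 * (K * B) ^ 2 + 32 * K ^ 2 * 27) * (τ * z) := by positivity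
    nlinarith
  · set T := Real.sqrt (z ^ 2 + 4 * Real.log z) with hT
    have hlog : 0 ≤ Real.log z := Real.log_nonneg (by linarith)
    have hTsq : T ^ 2 = z ^ 2 + 4 * Real.log z := Real.sq_sqrt (by positivity)
    have hTz : z ≤ T := Real.le_sqrt_of_sq_le (by linarith)
    have hT3 : T ≤ 3 * z := by
      rw [hT, Real.sqrt_le_left (by positivity)]
      have := Real.log_le_sub_one_of_pos hz0
      nlinarith
    have hT0 : 0 < T := by linarith
    have e1 : Real.exp (T ^ 2 / 2) = z ^ 2 / τ := by
      rw [hTsq, show (z ^ 2 + 4 * Real.log z) / 2 = z ^ 2 / 2 + (Real.log z + Real.log z) by ring, Real.exp_add,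
        Real.exp_add, Real.exp_log hz0, hexp]
      field_simp
    have e2 : Real.exp (-(T ^ 2) / 2) = τ / z ^ 2 := by
      rw [neg_div, Real.exp_neg, e1, inv_div]
    refine (L2_bound _ _ _ T (by linarith) hv h1 h2).trans ?_
    rw [e1, e2]
    have a1 : 4 * (K * B * τ) ^ 2 / T * (z ^ 2 / τ) ≤ 4 * (K * B) ^ 2 * (τ * z) := by
      calc _ ≤ 4 * (K * B * τ) ^ 2 / z * (z ^ 2 / τ) := by gcongr
        _ = _ := by field_simp
    have a2 : 32 * K ^ 2 * T ^ 3 * (τ / z ^ 2) ≤ 32 * K ^ 2 * 27 * (τ * z) := by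
      calc _ ≤ 32 * K ^ 2 * (3 * z) ^ 3 * (τ / z ^ 2) := by gcongr
        _ = _ := by field_simp; norm_num
    have a3 : 0 ≤ (2 * (K * B) + 4 * K) * (τ * z) := by positivity
    linarith

lemma postVar_memLp {t : ℝ} (ht : 0 < t) (ht1 : t ≤ 1) : MemLp (postVar t) 2 (gaussianReal 0 1) := by
  obtain ⟨K, hK1, hK⟩ := postVar_bounds
  have h4 : MemLp (fun x : ℝ => x) 4 (gaussianReal 0 1) := memLp_id_gaussianReal' 4 (by simp)
  have hsq : MemLp (fun x : ℝ => x ^ 2) 2 (gaussianReal 0 1) := by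
    rw [memLp_two_iff_integrable_sq (by fun_prop)]
    have := h4.integrable_norm_pow (p := 4) (by norm_num)
    refine this.congr (Eventually.of_forall fun x => ?_)
    simp only [Real.norm_eq_abs]
    rw [show |x| ^ 4 = (|x| ^ 2) ^ 2 by ring, sq_abs]
  have hb : MemLp (fun x : ℝ => K * (1 + x ^ 2)) 2 (gaussianReal 0 1) :=
    ((memLp_const (1:ℝ)).add hsq).const_mul K
  refine hb.mono (postVar_meas t).aestronglyMeasurable (Eventually.of_forall fun y => ?_)
  rw [Real.norm_of_nonneg (postVar_nonneg ht y)]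
  exact ((hK t y ht ht1).2).trans (le_abs_self _)

lemma sum_integral (n : ℕ) {t : ℝ} (ht : 0 < t) (ht1 : t ≤ 1) :
    ∫ y' : Fin (n + 1) → ℝ, (∑ i, postVar t (y' i)) ∂(Pdata (0 : Fin (n + 1) → ℝ)) =
      ((n : ℝ) + 1) * ∫ y, postVar t y ∂(gaussianReal 0 1) := by
  have hL := postVar_memLp ht ht1
  have hI : Integrable (postVar t) (gaussianReal 0 1) := hL.integrable (by norm_num)
  unfold Pdata
  simp only [Pi.zero_apply]
  rw [integral_finsetSum _ (fun i _ => integrable_comp_eval (μ := fun _ : Fin (n + 1) => gaussianReal 0 1) (i := i) hI)]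
  have : ∀ i : Fin (n + 1), ∫ y : Fin (n + 1) → ℝ, postVar t (y i) ∂(Measure.pi fun _ => gaussianReal 0 1)
      = ∫ y, postVar t y ∂(gaussianReal 0 1) := fun i =>
    integral_comp_eval (μ := fun _ : Fin (n + 1) => gaussianReal 0 1) (i := i) hI.1
  simp [this]

lemma cheb (n : ℕ) {t c : ℝ} (ht : 0 < t) (ht1 : t ≤ 1) (hc : 0 < c) :
    Pdata (0 : Fin (n + 1) → ℝ) {y : Fin (n + 1) → ℝ | c ≤ |(∑ i, postVar t (y i)) -
      ∫ y' : Fin (n + 1) → ℝ, (∑ i, postVar t (y' i)) ∂(Pdata (0 : Fin (n + 1) → ℝ))|} ≤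
    ENNReal.ofReal (((n : ℝ) + 1) * (∫ y, postVar t y ^ 2 ∂(gaussianReal 0 1)) / c ^ 2) := by
  have hL := postVar_memLp ht ht1
  have hP : Pdata (0 : Fin (n + 1) → ℝ) = Measure.pi fun _ => gaussianReal 0 1 := by
    unfold Pdata; simp
  rw [hP]
  set μ : Measure (Fin (n + 1) → ℝ) := Measure.pi fun _ => gaussianReal 0 1 with hμ
  have hX : MemLp (fun y : Fin (n + 1) → ℝ => ∑ i, postVar t (y i)) 2 μ := by
    refine memLp_finsetSum _ fun i _ => ?_
    exact hL.comp_measurePreserving (measurePreserving_eval (fun _ : Fin (n + 1) => gaussianReal 0 1) i)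
  refine (meas_ge_le_variance_div_sq hX hc).trans ?_
  apply ENNReal.ofReal_le_ofReal
  gcongr
  have h := variance_sum_pi (μ := fun _ : Fin (n + 1) => gaussianReal 0 1) (X := fun _ => postVar t) (fun _ => hL)
  have e : (∑ i : Fin (n + 1), fun ω : Fin (n + 1) → ℝ => postVar t (ω i)) = fun y => ∑ i, postVar t (y i) := by
    ext y; simp
  rw [e] at h
  rw [h]
  simp only [Finset.sum_const, Finset.card_univ, Fintype.card_fin, nsmul_eq_mul]
  push_cast
  gcongr
  exact variance_le_expectation_sq hL.1

lemma zet_tendsto (τ : ℕ → ℝ) (hpos : ∀ n, 0 < τ n) (hτ : Tendsto τ atTop (nhds 0)) :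
    Tendsto (fun n => zet (τ n)) atTop atTop := by
  unfold zet
  have h0 : Tendsto τ atTop (nhdsWithin 0 (Ioi 0)) :=
    tendsto_nhdsWithin_iff.2 ⟨hτ, Eventually.of_forall hpos⟩
  have h1 : Tendsto (fun n => 1 / τ n) atTop atTop := by
    simp only [one_div]
    exact tendsto_inv_nhdsGT_zero.comp h0
  exact Real.tendsto_sqrt_atTop.comp ((Real.tendsto_log_atTop.comp h1).const_mul_atTop (by norm_num))

lemma dev_compare {R x y a b : ℝ} (hR : 1 ≤ R) (h1 : x ≤ R * y)
    (h2 : y ≤ R * x) (h3 : a ≤ R * b) (h4 : b ≤ R * a) :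
    |x - a| ≤ R * |y - b| + (R - R⁻¹) * b := by
  have hR0 : 0 < R := by linarith
  have hi : R⁻¹ ≤ 1 := inv_le_one_of_one_le₀ hR
  have hi0 : 0 < R⁻¹ := by positivity
  have e2 : R⁻¹ * y ≤ x := by rw [inv_mul_le_iff₀ hR0]; exact h2
  have e4 : R⁻¹ * b ≤ a := by rw [inv_mul_le_iff₀ hR0]; exact h4
  have p1 := le_abs_self (y - b)
  have p2 := neg_abs_le (y - b)
  have p0 := abs_nonneg (y - b)
  rw [abs_le]
  constructor
  · nlinarith
  · nlinarith

theorem stmt_17 (C : ℝ) (hC : 0 < C)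
    (τ : ℕ → ℝ) (hτlb : ∀ n : ℕ, 1 / ((n : ℝ) + 1) ≤ τ n)
    (hτ : Tendsto τ atTop (nhds 0)) :
    ∀ ε : ℝ, 0 < ε →
      Tendsto
        (fun n =>
          Pdata (0 : Fin (n + 1) → ℝ)
            {y : Fin (n + 1) → ℝ |
              ε ≤ sSup ((fun t =>
                  ((((n : ℝ) + 1) * τ n * zet (τ n))⁻¹ *
                    |(∑ i, postVar t (y i)) -
                      ∫ y' : Fin (n + 1) → ℝ, (∑ i, postVar t (y' i))
                        ∂(Pdata (0 : Fin (n + 1) → ℝ))|)) ''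
                Set.Icc (C⁻¹ * τ n) (C * τ n))})
        atTop (nhds 0) := by
  intro ε hε
  have hpos : ∀ n, 0 < τ n := fun n => lt_of_lt_of_le (by positivity) (hτlb n)
  obtain ⟨M, hM, hmom⟩ := moment_bounds C hC
  set δ : ℝ := min (1 / 4) (ε / (20 * M)) with hδ
  have hδ0 : 0 < δ := lt_min (by norm_num) (by positivity)
  have hδ1 : δ ≤ 1 / 4 := min_le_left _ _
  have hδ2 : 5 * δ * M ≤ ε / 4 := by
    have : δ ≤ ε / (20 * M) := min_le_right _ _
    rw [le_div_iff₀ (by positivity)] at this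
    linarith
  set r : ℝ := 1 + δ with hr
  have hr1 : 1 < r := by linarith
  have hR1 : 1 ≤ r ^ 2 := one_le_pow₀ hr1.le
  have hR2 : r ^ 2 ≤ 2 := by rw [hr]; nlinarith
  have hRd : r ^ 2 - (r ^ 2)⁻¹ ≤ 5 * δ := by
    have h1 : 1 - 2 * δ ≤ (r ^ 2)⁻¹ := by
      rw [le_inv_comm₀ (by linarith) (by positivity), le_inv_comm₀ (by positivity) (by linarith)]
      rw [← one_div, le_div_iff₀ (by positivity), hr]
      nlinarith [mul_pos hδ0 (mul_pos hδ0 hδ0), mul_pos hδ0 hδ0]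
    have h2 : r ^ 2 ≤ 1 + 3 * δ := by rw [hr]; nlinarith
    linarith
  obtain ⟨J, hJ⟩ := pow_unbounded_of_one_lt (C ^ 2) hr1
  set tj : ℕ → ℕ → ℝ := fun n j => min (C⁻¹ * τ n * r ^ j) (C * τ n) with htj
  set D : (n : ℕ) → ℝ → (Fin (n + 1) → ℝ) → ℝ := fun n t y => |(∑ i, postVar t (y i)) -
      ∫ y' : Fin (n + 1) → ℝ, (∑ i, postVar t (y' i)) ∂(Pdata (0 : Fin (n + 1) → ℝ))| with hD
  have hz := zet_tendsto τ hpos hτ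
  -- the bounding sequence
  have hlim : Tendsto (fun n => ∑ _j ∈ Finset.range (J + 1), ENNReal.ofReal (64 * M / ε ^ 2 * (zet (τ n))⁻¹))
      atTop (nhds 0) := by
    have h1 : Tendsto (fun n => 64 * M / ε ^ 2 * (zet (τ n))⁻¹) atTop (nhds 0) := by
      simpa using hz.inv_tendsto_atTop.const_mul (64 * M / ε ^ 2)
    have h2 := ENNReal.tendsto_ofReal h1
    rw [ENNReal.ofReal_zero] at h2
    simpa using tendsto_finsetSum (Finset.range (J + 1)) fun _ _ => h2
  refine tendsto_of_tendsto_of_tendsto_of_le_of_le' tendsto_const_nhds hlim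
    (Eventually.of_forall fun _ => bot_le) ?_
  have hev1 : ∀ᶠ n in atTop, τ n < 1 := hτ.eventually (gt_mem_nhds one_pos)
  have hev2 : ∀ᶠ n in atTop, C * τ n < 1 := by
    have : Tendsto (fun n => C * τ n) atTop (nhds 0) := by simpa using hτ.const_mul C
    exact this.eventually (gt_mem_nhds one_pos)
  filter_upwards [hev1, hev2, hz.eventually_ge_atTop 2] with n hn1 hn2 hn3
  have hτn := hpos n
  have hz0 : 0 < zet (τ n) := by linarith
  set a : ℝ := ((n : ℝ) + 1) * τ n * zet (τ n) with ha
  have ha0 : 0 < a := by positivity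
  have htj0 : ∀ j, 0 < tj n j := fun j => lt_min (by positivity) (by positivity)
  have htjC : ∀ j, tj n j ≤ C * τ n := fun j => min_le_right _ _
  have htj1 : ∀ j, tj n j ≤ 1 := fun j => (htjC j).trans hn2.le
  have hsub : {y : Fin (n + 1) → ℝ | ε ≤ sSup ((fun t => a⁻¹ * D n t y) '' Set.Icc (C⁻¹ * τ n) (C * τ n))} ⊆
      ⋃ j ∈ Finset.range (J + 1), {y | a * (ε / 8) ≤ D n (tj n j) y} := by
    intro y hy
    by_contra hcon
    simp only [Set.mem_iUnion, Set.mem_ofPred_eq, not_exists, not_le] at hcon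
    have hle : sSup ((fun t => a⁻¹ * D n t y) '' Set.Icc (C⁻¹ * τ n) (C * τ n)) ≤ ε / 2 := by
      apply Real.sSup_le _ (by positivity)
      rintro _ ⟨t, ⟨ht1, ht2⟩, rfl⟩
      have hCτ : 0 < C⁻¹ * τ n := by positivity
      have ht0 : 0 < t := lt_of_lt_of_le hCτ ht1
      have ht11 : t ≤ 1 := ht2.trans hn2.le
      obtain ⟨j, hj1, hj2⟩ := exists_nat_pow_near (x := t / (C⁻¹ * τ n)) (y := r)
        (by rw [le_div_iff₀ hCτ]; linarith) hr1
      rw [le_div_iff₀ hCτ] at hj1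
      rw [div_lt_iff₀ hCτ] at hj2
      have hjJ : j < J + 1 := by
        by_contra hge
        have h5 : r ^ J ≤ r ^ j := pow_le_pow_right₀ hr1.le (by omega)
        have h6 : C ^ 2 * (C⁻¹ * τ n) < C * τ n := by
          calc _ < r ^ j * (C⁻¹ * τ n) := by gcongr; linarith
            _ ≤ _ := hj1.trans ht2
        have h7 : C ^ 2 * (C⁻¹ * τ n) = C * τ n := by field_simp
        linarith
      have htje : tj n j = C⁻¹ * τ n * r ^ j := by
        apply min_eq_left; linarith
      have c1 : t ≤ r * tj n j := by rw [htje]; rw [pow_succ] at hj2; linarith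
      have c2 : tj n j ≤ r * t := by
        have : tj n j ≤ t := by rw [htje]; linarith
        nlinarith
      have hcj := hcon j (Finset.mem_range.2 hjJ)
      have v1 := postVar_ratio ht0 (htj0 j) ht11 (htj1 j) c1 c2
      have v2 := postVar_ratio (htj0 j) ht0 (htj1 j) ht11 c2 c1
      have i1 : Integrable (postVar t) (gaussianReal 0 1) := (postVar_memLp ht0 ht11).integrable (by norm_num)
      have i2 : Integrable (postVar (tj n j)) (gaussianReal 0 1) :=
        (postVar_memLp (htj0 j) (htj1 j)).integrable (by norm_num)
      have hE := (hmom (τ n) (tj n j) hτn hn1.le hn3 (htj0 j) (htj1 j) (htjC j)).1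
      have hE0 : 0 ≤ ∫ y, postVar (tj n j) y ∂(gaussianReal 0 1) := integral_nonneg fun y => postVar_nonneg (htj0 j) y
      have hdev : D n t y ≤ r ^ 2 * D n (tj n j) y + (r ^ 2 - (r ^ 2)⁻¹) *
          (((n : ℝ) + 1) * ∫ y, postVar (tj n j) y ∂(gaussianReal 0 1)) := by
        simp only [hD]
        rw [sum_integral n ht0 ht11, sum_integral n (htj0 j) (htj1 j)]
        apply dev_compare hR1
        · rw [Finset.mul_sum]; exact Finset.sum_le_sum fun i _ => v1 _
        · rw [Finset.mul_sum]; exact Finset.sum_le_sum fun i _ => v2 _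
        · rw [mul_left_comm (r ^ 2)]
          refine mul_le_mul_of_nonneg_left ?_ (by positivity)
          rw [← integral_const_mul]
          exact integral_mono i1 (i2.const_mul _) v1
        · rw [mul_left_comm (r ^ 2)]
          refine mul_le_mul_of_nonneg_left ?_ (by positivity)
          rw [← integral_const_mul]
          exact integral_mono i2 (i1.const_mul _) v2
      have hDn : 0 ≤ D n (tj n j) y := abs_nonneg _
      have s1 : r ^ 2 * D n (tj n j) y ≤ 2 * (a * (ε / 8)) := by gcongr
      have s2 : (r ^ 2 - (r ^ 2)⁻¹) * (((n : ℝ) + 1) * ∫ y, postVar (tj n j) y ∂(gaussianReal 0 1)) ≤ (ε / 4) * a := by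
        calc _ ≤ 5 * δ * (((n : ℝ) + 1) * (M * (τ n * zet (τ n)))) := by gcongr
          _ = (5 * δ * M) * a := by rw [ha]; ring
          _ ≤ _ := by gcongr
      simp only
      rw [inv_mul_le_iff₀ ha0]
      linarith
    have : ε ≤ ε / 2 := le_trans hy hle
    linarith
  refine (measure_mono hsub).trans ((measure_biUnion_finset_le _ _).trans (Finset.sum_le_sum fun j _ => ?_))
  refine (cheb n (htj0 j) (htj1 j) (by positivity : 0 < a * (ε / 8))).trans ?_
  apply ENNReal.ofReal_le_ofReal
  have hE2 := (hmom (τ n) (tj n j) hτn hn1.le hn3 (htj0 j) (htj1 j) (htjC j)).2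
  have hnτ : 1 ≤ ((n : ℝ) + 1) * τ n := by
    have := hτlb n
    rw [div_le_iff₀ (by positivity)] at this
    linarith
  calc _ ≤ ((n : ℝ) + 1) * (M * (τ n * zet (τ n))) / (a * (ε / 8)) ^ 2 := by gcongr
    _ = 64 * M / ε ^ 2 * a⁻¹ := by
        rw [show ((n : ℝ) + 1) * (M * (τ n * zet (τ n))) = M * a by rw [ha]; ring]
        field_simp
        norm_num
    _ ≤ _ := by
        gcongr
        rw [ha]
        exact le_mul_of_one_le_left hz0.le hnτ

end
end

section
/- Let Y ~ N(0,1). For 1/n ≤ τ₁ < τ₂ ≤ 1/2, the horseshoe posterior variances satisfy E_0 ( var(θ | Y, τ₁) − var(θ | Y, τ₂) )² ≲ (τ₂ − τ₁)² τ₁^{-1} ζ_{τ₁}², with a universal multiplicative constant. -/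
open MeasureTheory ProbabilityTheory Filter Set Real Asymptotics
open scoped ENNReal NNReal BigOperators

noncomputable section

/-- Marginal normal factor. -/
def BB (y v : ℝ) : ℝ := (Real.sqrt (1 + v ^ 2))⁻¹ * Real.exp (-(y ^ 2) / (2 * (1 + v ^ 2)))

/-- Shrinkage weight. -/
def zz (v : ℝ) : ℝ := v ^ 2 / (1 + v ^ 2)

/-- Mixing weight. -/
def rho (τ y v : ℝ) : ℝ := BB y v / (τ ^ 2 + v ^ 2)

/-- Weighted moments of `zz`. -/
def JJ (k : ℕ) (τ y : ℝ) : ℝ := ∫ v in Set.Ioi (0 : ℝ), zz v ^ k * rho τ y v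

lemma zz_nonneg (v : ℝ) : 0 ≤ zz v := by unfold zz; positivity

lemma zz_le_one (v : ℝ) : zz v ≤ 1 := by
  unfold zz
  rw [div_le_one (by positivity)]
  linarith

lemma zz_pos {v : ℝ} (hv : 0 < v) : 0 < zz v := by unfold zz; positivity

lemma BB_pos (y v : ℝ) : 0 < BB y v := by unfold BB; positivity

lemma BB_le_one (y v : ℝ) : BB y v ≤ 1 := by
  unfold BB
  have h1 : (Real.sqrt (1 + v ^ 2))⁻¹ ≤ 1 := by
    apply inv_le_one_of_one_le₀
    rw [Real.one_le_sqrt]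
    nlinarith [sq_nonneg v]
  have h2 : Real.exp (-(y ^ 2) / (2 * (1 + v ^ 2))) ≤ 1 := by
    rw [Real.exp_le_one_iff]
    apply div_nonpos_of_nonpos_of_nonneg
    · nlinarith [sq_nonneg y]
    · positivity
  calc _ ≤ 1 * 1 := mul_le_mul h1 h2 (by positivity) zero_le_one
    _ = 1 := one_mul 1

lemma phiN_nonneg (x : ℝ) : 0 ≤ phiN x := by unfold phiN; positivity

lemma prod_id {y v : ℝ} (hv : 0 < v) (θ : ℝ) :
    phiN (y - θ) * (phiN (θ / v) / v) =
      (Real.sqrt (2 * Real.pi))⁻¹ * BB y v *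
        gaussianPDFReal (zz v * y) (Real.toNNReal (zz v)) θ := by
  rw [gaussianPDFReal, Real.coe_toNNReal _ (zz_nonneg v)]
  unfold phiN BB
  have hs : Real.sqrt (2 * Real.pi * zz v) =
      Real.sqrt (2 * Real.pi) * (v / Real.sqrt (1 + v ^ 2)) := by
    rw [Real.sqrt_mul (by positivity)]
    congr 1
    unfold zz
    rw [Real.sqrt_div (by positivity), Real.sqrt_sq hv.le]
  rw [hs]
  have hp : 0 < Real.sqrt (2 * Real.pi) := by positivity
  have hq : 0 < Real.sqrt (1 + v ^ 2) := by positivity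
  have he : Real.exp (-((y - θ) ^ 2) / 2) * Real.exp (-((θ / v) ^ 2) / 2) =
      Real.exp (-(y ^ 2) / (2 * (1 + v ^ 2))) *
        Real.exp (-(θ - zz v * y) ^ 2 / (2 * zz v)) := by
    rw [← Real.exp_add, ← Real.exp_add]
    congr 1
    unfold zz
    field_simp
    ring
  calc _ = (Real.sqrt (2 * Real.pi))⁻¹ * (Real.sqrt (2 * Real.pi))⁻¹ / v *
        (Real.exp (-((y - θ) ^ 2) / 2) * Real.exp (-((θ / v) ^ 2) / 2)) := by ring
    _ = _ := by
      rw [he]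
      field_simp

lemma gauss_transfer {y v : ℝ} (hv : 0 < v) {f : ℝ → ℝ}
    (hf : Integrable f (gaussianReal (zz v * y) (Real.toNNReal (zz v)))) :
    Integrable (fun θ => f θ * (phiN (y - θ) * (phiN (θ / v) / v))) ∧
    ∫ θ, f θ * (phiN (y - θ) * (phiN (θ / v) / v)) =
      (Real.sqrt (2 * Real.pi))⁻¹ * BB y v *
        ∫ θ, f θ ∂(gaussianReal (zz v * y) (Real.toNNReal (zz v))) := by
  have hne : Real.toNNReal (zz v) ≠ 0 := by
    simpa using zz_pos hv
  have e : (fun θ => f θ * (phiN (y - θ) * (phiN (θ / v) / v))) = fun θ =>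
      ((Real.sqrt (2 * Real.pi))⁻¹ * BB y v) *
        (gaussianPDFReal (zz v * y) (Real.toNNReal (zz v)) θ • f θ) := by
    funext θ
    rw [prod_id hv, smul_eq_mul]
    ring
  rw [e]
  constructor
  · apply Integrable.const_mul
    rw [gaussianReal_of_var_ne_zero _ hne,
      integrable_withDensity_iff_integrable_smul' (measurable_gaussianPDF _ _)
        (Filter.Eventually.of_forall fun _ => gaussianPDF_lt_top)] at hf
    simpa [toReal_gaussianPDF] using hf
  · rw [integral_const_mul, integral_gaussianReal_eq_integral_smul hne]

lemma gauss_int (m : ℝ) (s : ℝ≥0) (k : ℕ) :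
    Integrable (fun θ : ℝ => θ ^ k) (gaussianReal m s) := by
  have h := (memLp_id_gaussianReal (μ := m) (v := s) (k : ℝ≥0)).integrable_norm_pow'
  refine h.mono' (by fun_prop) (Filter.Eventually.of_forall fun x => ?_)
  simp

lemma gauss_m2 (m : ℝ) (s : ℝ≥0) :
    ∫ θ : ℝ, θ ^ 2 ∂(gaussianReal m s) = s + m ^ 2 := by
  have h := variance_eq_sub (memLp_id_gaussianReal (μ := m) (v := s) 2)
  rw [variance_id_gaussianReal] at h
  have h2 : ∫ θ, id θ ∂(gaussianReal m s) = m := integral_id_gaussianReal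
  rw [h2] at h
  have h3 : ∫ θ : ℝ, (id ^ 2 : ℝ → ℝ) θ ∂(gaussianReal m s) =
     ∫ θ : ℝ, θ ^ 2 ∂(gaussianReal m s) := rfl
  linarith

/-- Conditional moments. -/
def mom (k : ℕ) (y v : ℝ) : ℝ :=
  ∫ θ, θ ^ k ∂(gaussianReal (zz v * y) (Real.toNNReal (zz v)))

lemma mom_zero (y v : ℝ) : mom 0 y v = 1 := by simp [mom]
lemma mom_one (y v : ℝ) : mom 1 y v = zz v * y := by
  simp only [mom, pow_one]
  exact integral_id_gaussianReal
lemma mom_two (y v : ℝ) : mom 2 y v = zz v + (zz v * y) ^ 2 := by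
  rw [mom, gauss_m2, Real.coe_toNNReal _ (zz_nonneg v)]

lemma phiN_meas : Measurable phiN := by unfold phiN; fun_prop

lemma fubini_main {τ : ℝ} (hτ : 0 < τ) (y : ℝ) {k : ℕ} (hk : k ≤ 2) :
    Integrable (fun θ => θ ^ k * postDens τ y θ) ∧
    ∫ θ, θ ^ k * postDens τ y θ =
      ∫ l in Set.Ioi (0 : ℝ), ((Real.sqrt (2 * Real.pi))⁻¹ * BB y (l * τ) * mom k y (l * τ)) *
        (2 / (Real.pi * (1 + l ^ 2))) := by
  set F : ℝ → ℝ → ℝ := fun θ l => θ ^ k * (phiN (y - θ) * (phiN (θ / (l * τ)) / (l * τ))) *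
    (2 / (Real.pi * (1 + l ^ 2))) with hF
  have hmeas : Measurable (Function.uncurry F) := by
    have := phiN_meas
    simp only [hF, Function.uncurry_def]
    fun_prop
  have hpt : ∀ l ∈ Set.Ioi (0 : ℝ), Integrable (fun θ => F θ l) ∧
      ∫ θ, ‖F θ l‖ ≤ (2 + y ^ 2) * (1 + l ^ 2)⁻¹ := by
    intro l hl
    have hl0 : 0 < l := hl
    have hv : 0 < l * τ := mul_pos hl0 hτ
    have hi := (gauss_transfer (y := y) hv (gauss_int _ _ k)).1.mul_const
      (2 / (Real.pi * (1 + l ^ 2)))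
    refine ⟨hi, ?_⟩
    have hg := gauss_transfer (y := y) hv (f := fun θ => 1 + θ ^ 2)
      ((integrable_const _).add (gauss_int _ _ 2))
    have hgm : ∫ θ, (1 + θ ^ 2) ∂(gaussianReal (zz (l * τ) * y) (Real.toNNReal (zz (l * τ)))) =
        1 + (zz (l * τ) + (zz (l * τ) * y) ^ 2) := by
      rw [integral_add (integrable_const _) (gauss_int _ _ 2)]
      rw [gauss_m2, Real.coe_toNNReal _ (zz_nonneg _)]
      simp
    have hc0 : 0 ≤ 2 / (Real.pi * (1 + l ^ 2)) := by positivity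
    have hle : ∫ θ, ‖F θ l‖ ≤ ∫ θ, ((1 + θ ^ 2) *
        (phiN (y - θ) * (phiN (θ / (l * τ)) / (l * τ)))) * (2 / (Real.pi * (1 + l ^ 2))) := by
      apply integral_mono hi.norm (hg.1.mul_const _)
      intro θ
      have hp1 := phiN_nonneg (y - θ)
      have hp2 := phiN_nonneg (θ / (l * τ))
      have hkk : |θ| ^ k ≤ 1 + θ ^ 2 := by
        interval_cases k
        · simp; positivity
        · rw [pow_one, ← sq_abs θ]; nlinarith [sq_nonneg (|θ| - 1), abs_nonneg θ]
        · rw [sq_abs]; linarith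
      have hnn : 0 ≤ phiN (y - θ) * (phiN (θ / (l * τ)) / (l * τ)) := by positivity
      simp only [norm_mul, norm_pow, Real.norm_eq_abs]
      rw [abs_of_nonneg hc0, abs_of_nonneg hp1,
        abs_of_nonneg (show 0 ≤ phiN (θ / (l * τ)) / (l * τ) by positivity)]
      gcongr
    refine hle.trans ?_
    rw [integral_mul_const, hg.2, hgm]
    have hz0 := zz_nonneg (l * τ)
    have hz1 := zz_le_one (l * τ)
    have hb0 := BB_pos y (l * τ)
    have hb1 := BB_le_one y (l * τ)
    have hpi : (2:ℝ) ≤ Real.pi := Real.two_le_pi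
    have hs : (Real.sqrt (2 * Real.pi))⁻¹ ≤ 1 := by
      apply inv_le_one_of_one_le₀
      rw [Real.one_le_sqrt]
      nlinarith
    have hs0 : 0 ≤ (Real.sqrt (2 * Real.pi))⁻¹ := by positivity
    have h1 : (Real.sqrt (2 * Real.pi))⁻¹ * BB y (l * τ) ≤ 1 := by
      calc _ ≤ 1 * 1 := mul_le_mul hs hb1 hb0.le zero_le_one
        _ = 1 := one_mul 1
    have h2 : 1 + (zz (l * τ) + (zz (l * τ) * y) ^ 2) ≤ 2 + y ^ 2 := by
      have : zz (l * τ) ^ 2 ≤ 1 := by nlinarith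
      have : (zz (l * τ) * y) ^ 2 ≤ y ^ 2 := by
        rw [mul_pow]; nlinarith [sq_nonneg y]
      linarith
    have h3 : 2 / (Real.pi * (1 + l ^ 2)) ≤ (1 + l ^ 2)⁻¹ := by
      rw [div_le_iff₀ (by positivity)]
      have : (1 + l ^ 2)⁻¹ * (Real.pi * (1 + l ^ 2)) = Real.pi := by field_simp
      linarith
    have h4 : (Real.sqrt (2 * Real.pi))⁻¹ * BB y (l * τ) *
        (1 + (zz (l * τ) + (zz (l * τ) * y) ^ 2)) ≤ 2 + y ^ 2 := by
      calc _ ≤ 1 * (2 + y ^ 2) := mul_le_mul h1 h2 (by positivity) zero_le_one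
        _ = _ := one_mul _
    exact mul_le_mul h4 h3 hc0 (by positivity)
  have hae : ∀ᵐ l ∂(volume.restrict (Set.Ioi (0 : ℝ))), l ∈ Set.Ioi (0 : ℝ) :=
    ae_restrict_mem measurableSet_Ioi
  have hFint : Integrable (Function.uncurry F)
      ((volume : Measure ℝ).prod (volume.restrict (Set.Ioi (0 : ℝ)))) := by
    rw [integrable_prod_iff' hmeas.aestronglyMeasurable]
    constructor
    · filter_upwards [hae] with l hl using (hpt l hl).1
    · refine Integrable.mono' (g := fun l => (2 + y ^ 2) * (1 + l ^ 2)⁻¹)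
        ((integrable_inv_one_add_sq.integrableOn (s := Set.Ioi 0)).const_mul _) ?_ ?_
      · exact (hmeas.aestronglyMeasurable.norm.prod_swap).integral_prod_right'
      · filter_upwards [hae] with l hl
        rw [Real.norm_of_nonneg (integral_nonneg fun _ => norm_nonneg _)]
        exact (hpt l hl).2
  have hpd : ∀ θ, θ ^ k * postDens τ y θ = ∫ l in Set.Ioi (0 : ℝ), F θ l := by
    intro θ
    unfold postDens gHS
    rw [← mul_assoc, ← integral_const_mul]
    congr 1
    funext l
    simp only [hF]
    ring
  simp_rw [hpd]
  refine ⟨hFint.integral_prod_left, ?_⟩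
  rw [integral_integral_swap hFint]
  apply setIntegral_congr_fun measurableSet_Ioi
  intro l hl
  have hv : 0 < l * τ := mul_pos hl hτ
  simp only [hF]
  rw [integral_mul_const, (gauss_transfer (y := y) hv (gauss_int _ _ k)).2]
  rfl

lemma scale_main {τ : ℝ} (hτ : 0 < τ) (H : ℝ → ℝ) :
    ∫ l in Set.Ioi (0 : ℝ), H (l * τ) * (2 / (Real.pi * (1 + l ^ 2))) =
      (2 * τ / Real.pi) * ∫ v in Set.Ioi (0 : ℝ), H v / (τ ^ 2 + v ^ 2) := by
  have h := integral_comp_mul_right_Ioi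
    (fun v => H v * (2 * τ ^ 2 / (Real.pi * (τ ^ 2 + v ^ 2)))) 0 hτ
  rw [zero_mul] at h
  have e1 : ∀ l : ℝ, H (l * τ) * (2 / (Real.pi * (1 + l ^ 2))) =
      H (l * τ) * (2 * τ ^ 2 / (Real.pi * (τ ^ 2 + (l * τ) ^ 2))) := by
    intro l
    congr 1
    field_simp
  simp_rw [e1]
  rw [h, smul_eq_mul, ← integral_const_mul, ← integral_const_mul]
  congr 1
  funext v
  have : 0 < τ ^ 2 + v ^ 2 := by positivity
  field_simp

lemma rho_cont {τ : ℝ} (hτ : 0 < τ) (y : ℝ) : Continuous (rho τ y) := by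
  unfold rho BB
  have h1 : ∀ v : ℝ, Real.sqrt (1 + v ^ 2) ≠ 0 := fun v => by positivity
  have h2 : ∀ v : ℝ, τ ^ 2 + v ^ 2 ≠ 0 := fun v => by positivity
  have h3 : ∀ v : ℝ, 2 * (1 + v ^ 2) ≠ 0 := fun v => by positivity
  fun_prop (disch := first | exact h1 | exact h2 | exact h3 | simp_all)

lemma zz_cont : Continuous zz := by
  unfold zz
  have h3 : ∀ v : ℝ, 1 + v ^ 2 ≠ 0 := fun v => by positivity
  fun_prop (disch := first | exact h3 | simp_all)

lemma rho_pos {τ : ℝ} (hτ : 0 < τ) (y v : ℝ) : 0 < rho τ y v := by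
  unfold rho
  have := BB_pos y v
  positivity

lemma cauchy_int {τ : ℝ} (hτ : 0 < τ) : Integrable (fun v : ℝ => (τ ^ 2 + v ^ 2)⁻¹) := by
  have h := (integrable_inv_one_add_sq.comp_div hτ.ne').const_mul ((τ ^ 2)⁻¹)
  refine h.congr (Filter.Eventually.of_forall fun v => ?_)
  simp only
  field_simp

lemma bdd_rho_int {τ : ℝ} (hτ : 0 < τ) (y : ℝ) {f : ℝ → ℝ} (hf : Continuous f) {C : ℝ}
    (hC : ∀ v, |f v| ≤ C) :
    IntegrableOn (fun v => f v * rho τ y v) (Set.Ioi 0) := by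
  refine Integrable.integrableOn ?_
  refine Integrable.mono' ((cauchy_int hτ).const_mul C)
    (hf.mul (rho_cont hτ y)).aestronglyMeasurable (Filter.Eventually.of_forall fun v => ?_)
  rw [norm_mul, Real.norm_eq_abs, Real.norm_eq_abs, abs_of_pos (rho_pos hτ y v)]
  have hb := BB_le_one y v
  have hb0 := BB_pos y v
  have : rho τ y v ≤ (τ ^ 2 + v ^ 2)⁻¹ := by
    unfold rho
    rw [div_eq_mul_inv]
    have : 0 ≤ (τ ^ 2 + v ^ 2)⁻¹ := by positivity
    nlinarith
  exact mul_le_mul (hC v) this (rho_pos hτ y v).le ((abs_nonneg _).trans (hC v))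

lemma zzpow_rho_int {τ : ℝ} (hτ : 0 < τ) (y : ℝ) (k : ℕ) :
    IntegrableOn (fun v => zz v ^ k * rho τ y v) (Set.Ioi 0) := by
  refine bdd_rho_int hτ y (zz_cont.pow k) (C := 1) fun v => ?_
  rw [abs_of_nonneg (pow_nonneg (zz_nonneg v) k)]
  exact pow_le_one₀ (zz_nonneg v) (zz_le_one v)

lemma JJ_zero_pos {τ : ℝ} (hτ : 0 < τ) (y : ℝ) : 0 < JJ 0 τ y := by
  unfold JJ
  rw [setIntegral_pos_iff_support_of_nonneg_ae]
  · have : (Function.support fun v => zz v ^ 0 * rho τ y v) ∩ Set.Ioi 0 = Set.Ioi 0 := by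
      apply Set.inter_eq_right.mpr
      intro v _
      simp [(rho_pos hτ y v).ne']
    rw [this]
    simp
  · filter_upwards with v
    have := rho_pos hτ y v
    simp [this.le]
  · exact zzpow_rho_int hτ y 0

lemma postVar_formula {τ : ℝ} (hτ : 0 < τ) (y : ℝ) :
    postVar τ y = JJ 1 τ y / JJ 0 τ y +
      y ^ 2 * (JJ 2 τ y / JJ 0 τ y - (JJ 1 τ y / JJ 0 τ y) ^ 2) := by
  set c := (2 * τ / Real.pi) * (Real.sqrt (2 * Real.pi))⁻¹ with hc
  have hc0 : 0 < c := by positivity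
  have hM : ∀ k ≤ 2, ∫ θ, θ ^ k * postDens τ y θ =
      c * ∫ v in Set.Ioi (0 : ℝ), mom k y v * rho τ y v := by
    intro k hk
    rw [(fubini_main hτ y hk).2,
      scale_main hτ (fun v => (Real.sqrt (2 * Real.pi))⁻¹ * BB y v * mom k y v), hc, mul_assoc]
    congr 1
    rw [← integral_const_mul]
    congr 1
    funext v
    unfold rho
    ring
  have h0 : ∫ θ, postDens τ y θ = c * JJ 0 τ y := by
    have := hM 0 (by norm_num)
    simpa [mom_zero, JJ] using this
  have h1 : ∫ θ, θ * postDens τ y θ = c * (y * JJ 1 τ y) := by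
    have := hM 1 (by norm_num)
    simp only [pow_one, mom_one] at this
    rw [this, JJ, ← integral_const_mul y]
    congr 2
    funext v
    ring
  have h2 : ∫ θ, θ ^ 2 * postDens τ y θ = c * (JJ 1 τ y + y ^ 2 * JJ 2 τ y) := by
    have := hM 2 (by norm_num)
    simp only [mom_two] at this
    rw [this, JJ, JJ, ← integral_const_mul (y ^ 2), ← integral_add (zzpow_rho_int hτ y 1)
      ((zzpow_rho_int hτ y 2).const_mul _)]
    congr 2
    funext v
    ring
  have i0 : Integrable (fun θ => postDens τ y θ) := by
    simpa using (fubini_main hτ y (k := 0) (by norm_num)).1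
  have i1 : Integrable (fun θ => θ * postDens τ y θ) := by
    simpa using (fubini_main hτ y (k := 1) (by norm_num)).1
  have i2 := (fubini_main hτ y (k := 2) (by norm_num)).1
  have hJ := JJ_zero_pos hτ y
  have hmean : postMean τ y = y * (JJ 1 τ y / JJ 0 τ y) := by
    unfold postMean margDens
    rw [h0, h1]
    field_simp
  unfold postVar margDens
  have e : ∫ θ, (θ - postMean τ y) ^ 2 * postDens τ y θ =
      (∫ θ, θ ^ 2 * postDens τ y θ) - 2 * postMean τ y * (∫ θ, θ * postDens τ y θ) +
        postMean τ y ^ 2 * ∫ θ, postDens τ y θ := by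
    have i3 : Integrable (fun θ => θ ^ 2 * postDens τ y θ -
        2 * postMean τ y * (θ * postDens τ y θ)) := i2.sub (i1.const_mul _)
    rw [← integral_const_mul, ← integral_const_mul, ← integral_sub i2 (i1.const_mul _),
      ← integral_add i3 (i0.const_mul _)]
    congr 1
    funext θ
    ring
  rw [e, h0, h1, h2, hmean]
  field_simp
  ring

lemma cauchy_integral {a : ℝ} (ha : 0 < a) :
    ∫ v in Set.Ioi (0 : ℝ), (a ^ 2 + v ^ 2)⁻¹ = Real.pi / (2 * a) := by
  have h := scale_main ha (fun _ => 1)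
  have h2 : ∫ l in Set.Ioi (0 : ℝ), (1 : ℝ) * (2 / (Real.pi * (1 + l ^ 2))) = 1 := by
    have : ∀ l : ℝ, (1 : ℝ) * (2 / (Real.pi * (1 + l ^ 2))) = (2 / Real.pi) * (1 + l ^ 2)⁻¹ := by
      intro l
      field_simp
    simp_rw [this]
    rw [integral_const_mul, integral_Ioi_inv_one_add_sq, Real.arctan_zero]
    field_simp
    ring
  rw [h2] at h
  simp only [one_div] at h
  have hp := Real.pi_pos
  field_simp at h ⊢
  linarith

lemma rho_diff {a b : ℝ} (ha : 0 < a) (hb : 0 < b) (y v : ℝ) :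
    rho a y v - rho b y v = (b ^ 2 - a ^ 2) * ((a ^ 2 + v ^ 2)⁻¹ * rho b y v) := by
  unfold rho
  have h1 : 0 < a ^ 2 + v ^ 2 := by positivity
  have h2 : 0 < b ^ 2 + v ^ 2 := by positivity
  field_simp
  ring

lemma zz_div_le {a : ℝ} (ha : 0 < a) (v : ℝ) {k : ℕ} (hk : 1 ≤ k) :
    zz v ^ k * (a ^ 2 + v ^ 2)⁻¹ ≤ 1 := by
  have h1 : zz v ^ k ≤ zz v := by
    calc zz v ^ k ≤ zz v ^ 1 := pow_le_pow_of_le_one (zz_nonneg v) (zz_le_one v) hk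
      _ = _ := pow_one _
  have h2 : zz v ≤ a ^ 2 + v ^ 2 := by
    unfold zz
    rw [div_le_iff₀ (by positivity)]
    nlinarith [sq_nonneg v, sq_nonneg a, mul_nonneg (sq_nonneg a) (sq_nonneg v),
      mul_nonneg (sq_nonneg v) (sq_nonneg v)]
  rw [← div_eq_mul_inv, div_le_one (by positivity)]
  linarith

lemma JJ_diff {a b : ℝ} (ha : 0 < a) (hab : a < b) (y : ℝ) {k : ℕ} (hk : 1 ≤ k) :
    |JJ k a y - JJ k b y| ≤ (b ^ 2 - a ^ 2) * JJ 0 b y := by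
  have hb : 0 < b := ha.trans hab
  have hd : 0 ≤ b ^ 2 - a ^ 2 := by nlinarith
  unfold JJ
  rw [← integral_sub (zzpow_rho_int ha y k) (zzpow_rho_int hb y k), ← integral_const_mul]
  refine (abs_integral_le_integral_abs).trans ?_
  apply integral_mono ((zzpow_rho_int ha y k).sub (zzpow_rho_int hb y k)).abs
    ((zzpow_rho_int hb y 0).const_mul _)
  intro v
  have hr := rho_pos hb y v
  have hz := pow_nonneg (zz_nonneg v) k
  have e : zz v ^ k * rho a y v - zz v ^ k * rho b y v =
      (b ^ 2 - a ^ 2) * ((zz v ^ k * (a ^ 2 + v ^ 2)⁻¹) * rho b y v) := by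
    rw [← mul_sub, rho_diff ha hb]
    ring
  have h0 : 0 ≤ zz v ^ k * (a ^ 2 + v ^ 2)⁻¹ := by positivity
  simp only [Pi.sub_apply]
  rw [e, abs_of_nonneg (by positivity), pow_zero]
  have := zz_div_le ha v hk
  gcongr

lemma JJ_lower {t : ℝ} (ht : 0 < t) (ht2 : t ≤ 1 / 2) (y : ℝ) :
    Real.exp (-(y ^ 2) / (2 * (1 + t ^ 2))) / (10 * t) ≤ JJ 0 t y := by
  have hsub : Set.Ioc t (2 * t) ⊆ Set.Ioi 0 := fun v hv => ht.trans hv.1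
  have h1 : ∫ v in Set.Ioc t (2 * t), zz v ^ 0 * rho t y v ≤ JJ 0 t y := by
    unfold JJ
    apply setIntegral_mono_set (zzpow_rho_int ht y 0)
    · filter_upwards with v
      have := rho_pos ht y v
      simp [this.le]
    · exact hsub.eventuallyLE
  refine le_trans ?_ h1
  set E := Real.exp (-(y ^ 2) / (2 * (1 + t ^ 2))) with hE
  have h2 : ∫ v in Set.Ioc t (2 * t), E / (10 * t ^ 2) = E / (10 * t) := by
    rw [setIntegral_const, smul_eq_mul]
    simp only [measureReal_def, Real.volume_Ioc]
    rw [ENNReal.toReal_ofReal (by linarith)]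
    field_simp
    ring
  rw [← h2]
  apply setIntegral_mono_on
  · exact integrableOn_const (by simp)
  · exact (zzpow_rho_int ht y 0).mono_set hsub
  · exact measurableSet_Ioc
  · intro v hv
    have hv1 : t ≤ v := hv.1.le
    have hv2 : v ≤ 2 * t := hv.2
    have hv3 : v ≤ 1 := by linarith
    have hv0 : 0 < v := by linarith
    rw [pow_zero, one_mul]
    unfold rho BB
    have hs : (2 : ℝ)⁻¹ ≤ (Real.sqrt (1 + v ^ 2))⁻¹ := by
      apply inv_anti₀ (by positivity)
      rw [Real.sqrt_le_left (by norm_num)]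
      nlinarith
    have he : E ≤ Real.exp (-(y ^ 2) / (2 * (1 + v ^ 2))) := by
      apply Real.exp_le_exp.mpr
      rw [neg_div, neg_div]
      apply neg_le_neg
      gcongr
    have hE0 : 0 < E := Real.exp_pos _
    have hd : t ^ 2 + v ^ 2 ≤ 5 * t ^ 2 := by nlinarith
    calc E / (10 * t ^ 2) = 2⁻¹ * E / (5 * t ^ 2) := by field_simp; ring
      _ ≤ _ := by gcongr

lemma JJ0_diff {a b : ℝ} (ha : 0 < a) (hab : a < b) (hb2 : b ≤ 1 / 2) (y : ℝ) :
    |JJ 0 a y - JJ 0 b y| ≤ (b ^ 2 - a ^ 2) * (21 / (a * b) * JJ 0 b y) := by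
  have hb : 0 < b := ha.trans hab
  have hd : 0 ≤ b ^ 2 - a ^ 2 := by nlinarith
  set E := Real.exp (-(y ^ 2) / (2 * (1 + b ^ 2))) with hE
  have hE0 : 0 < E := Real.exp_pos _
  have hlow := JJ_lower hb hb2 y
  have hci : IntegrableOn (fun v : ℝ => (a ^ 2 + v ^ 2)⁻¹) (Set.Ioi 0) :=
    (cauchy_int ha).integrableOn
  have hmain : |JJ 0 a y - JJ 0 b y| ≤ (b ^ 2 - a ^ 2) *
      ((1 / (a * b)) * JJ 0 b y + (E / b ^ 2) * (Real.pi / (2 * a))) := by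
    rw [← cauchy_integral ha]
    unfold JJ
    rw [← integral_sub (zzpow_rho_int ha y 0) (zzpow_rho_int hb y 0), ← integral_const_mul,
      ← integral_const_mul, ← integral_add ((zzpow_rho_int hb y 0).const_mul _) (hci.const_mul _),
      ← integral_const_mul]
    refine (abs_integral_le_integral_abs).trans ?_
    apply setIntegral_mono_on ((zzpow_rho_int ha y 0).sub (zzpow_rho_int hb y 0)).abs
      ((((zzpow_rho_int hb y 0).const_mul _).add (hci.const_mul _)).const_mul _) measurableSet_Ioi
    intro v hv
    have hv0 : 0 < v := hv
    have hr := rho_pos hb y v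
    simp only [pow_zero, one_mul, Pi.add_apply, Pi.sub_apply]
    rw [rho_diff ha hb, abs_of_nonneg (by positivity)]
    refine mul_le_mul_of_nonneg_left ?_ hd
    rcases le_total b v with h | h
    · have h1 : (a ^ 2 + v ^ 2)⁻¹ ≤ 1 / (a * b) := by
        rw [one_div]
        apply inv_anti₀ (by positivity)
        nlinarith
      have h2 : 0 ≤ E / b ^ 2 * (a ^ 2 + v ^ 2)⁻¹ := by positivity
      have h3 := mul_le_mul_of_nonneg_right h1 hr.le
      linarith
    · have h1 : rho b y v ≤ E / b ^ 2 := by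
        unfold rho BB
        have hs : (Real.sqrt (1 + v ^ 2))⁻¹ ≤ 1 := by
          apply inv_le_one_of_one_le₀
          rw [Real.one_le_sqrt]
          nlinarith [sq_nonneg v]
        have he : Real.exp (-(y ^ 2) / (2 * (1 + v ^ 2))) ≤ E := by
          apply Real.exp_le_exp.mpr
          rw [neg_div, neg_div]
          apply neg_le_neg
          gcongr
        have : (Real.sqrt (1 + v ^ 2))⁻¹ * Real.exp (-(y ^ 2) / (2 * (1 + v ^ 2))) ≤ E := by
          calc _ ≤ 1 * E := by gcongr
            _ = E := one_mul E
        gcongr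
        nlinarith [sq_nonneg v]
      have h2 : 0 ≤ 1 / (a * b) * rho b y v := by positivity
      have h4 : 0 ≤ (a ^ 2 + v ^ 2)⁻¹ := by positivity
      have h3 := mul_le_mul_of_nonneg_left h1 h4
      linarith
  refine hmain.trans (mul_le_mul_of_nonneg_left ?_ hd)
  have h1 : E / b ^ 2 * (Real.pi / (2 * a)) ≤ 20 / (a * b) * JJ 0 b y := by
    calc E / b ^ 2 * (Real.pi / (2 * a)) ≤ E / b ^ 2 * (4 / (2 * a)) := by
          have := Real.pi_le_four
          gcongr
      _ = 20 / (a * b) * (E / (10 * b)) := by field_simp; ring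
      _ ≤ _ := by gcongr
  have : 21 / (a * b) * JJ 0 b y = 1 / (a * b) * JJ 0 b y + 20 / (a * b) * JJ 0 b y := by ring
  linarith

lemma uu_deriv (v : ℝ) : HasDerivAt (fun v : ℝ => v / Real.sqrt (1 + v ^ 2))
    ((1 + v ^ 2)⁻¹ * (Real.sqrt (1 + v ^ 2))⁻¹) v := by
  have h1 : 0 < 1 + v ^ 2 := by positivity
  have h2 : HasDerivAt (fun v : ℝ => 1 + v ^ 2) (2 * v) v := by
    have := (hasDerivAt_pow 2 v).const_add 1
    simpa using this
  have h3 := (hasDerivAt_id v).div (h2.sqrt h1.ne') (by positivity)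
  refine h3.congr_deriv ?_
  have hs : 0 < Real.sqrt (1 + v ^ 2) := by positivity
  have hsq : Real.sqrt (1 + v ^ 2) ^ 2 = 1 + v ^ 2 := Real.sq_sqrt h1.le
  simp only [id]
  set s := Real.sqrt (1 + v ^ 2)
  rw [← hsq]
  field_simp
  linarith

lemma uu_tendsto : Tendsto (fun v : ℝ => v / Real.sqrt (1 + v ^ 2)) atTop (nhds 1) := by
  have h : Tendsto (fun v : ℝ => (Real.sqrt ((v⁻¹) ^ 2 + 1))⁻¹) atTop (nhds 1) := by
    have h0 : Tendsto (fun v : ℝ => v⁻¹) atTop (nhds 0) := tendsto_inv_atTop_zero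
    have h1 : ContinuousAt (fun w : ℝ => (Real.sqrt (w ^ 2 + 1))⁻¹) 0 := by
      apply ContinuousAt.inv₀
      · fun_prop
      · simp
    have h2 := h1.tendsto.comp h0
    simp only [ne_eq, OfNat.ofNat_ne_zero, not_false_eq_true, zero_pow, zero_add, Real.sqrt_one,
      inv_one] at h2
    exact h2
  refine h.congr' ?_
  filter_upwards [eventually_gt_atTop 0] with v hv
  have : (v⁻¹) ^ 2 + 1 = (1 + v ^ 2) / v ^ 2 := by field_simp
  rw [this, Real.sqrt_div (by positivity), Real.sqrt_sq hv.le, inv_div]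

lemma JJ1_upper {t : ℝ} (ht : 0 < t) (y : ℝ) : (1 + y ^ 2) * JJ 1 t y ≤ 3 := by
  set u : ℝ → ℝ := fun v => v / Real.sqrt (1 + v ^ 2) with hu
  set g : ℝ → ℝ := fun v => u v + 2 * Real.exp (-(y ^ 2) * (1 - u v) / 2) with hg
  set g' : ℝ → ℝ := fun v => ((1 + v ^ 2)⁻¹ * (Real.sqrt (1 + v ^ 2))⁻¹) *
    (1 + y ^ 2 * Real.exp (-(y ^ 2) * (1 - u v) / 2)) with hg'
  have hder : ∀ v ∈ Set.Ici (0 : ℝ), HasDerivAt g (g' v) v := by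
    intro v _
    have h1 := uu_deriv v
    have h2 := ((((h1.const_sub 1).const_mul (-(y ^ 2))).div_const 2).exp.const_mul 2)
    refine (h1.add h2).congr_deriv ?_
    simp only [hg', hu]
    ring
  have hpos : ∀ v ∈ Set.Ioi (0 : ℝ), 0 ≤ g' v := by
    intro v _
    simp only [hg']
    positivity
  have hlim : Tendsto g atTop (nhds 3) := by
    have hc : Continuous fun w : ℝ => w + 2 * Real.exp (-(y ^ 2) * (1 - w) / 2) := by fun_prop
    have := (hc.tendsto 1).comp uu_tendsto
    have e : (1 : ℝ) + 2 * Real.exp (-(y ^ 2) * (1 - 1) / 2) = 3 := by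
      simp; norm_num
    rw [e] at this
    exact this
  have hI := integrableOn_Ioi_deriv_of_nonneg' hder hpos hlim
  have hV := integral_Ioi_of_hasDerivAt_of_nonneg' hder hpos hlim
  have hg0 : 0 ≤ g 0 := by simp only [hg, hu]; simp; positivity
  have hle : (1 + y ^ 2) * JJ 1 t y ≤ ∫ v in Set.Ioi (0 : ℝ), g' v := by
    unfold JJ
    rw [← integral_const_mul]
    apply setIntegral_mono_on ((zzpow_rho_int ht y 1).const_mul _) hI measurableSet_Ioi
    intro v hv
    have hv0 : 0 < v := hv
    have hs : 0 < Real.sqrt (1 + v ^ 2) := by positivity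
    have hsq : Real.sqrt (1 + v ^ 2) ^ 2 = 1 + v ^ 2 := Real.sq_sqrt (by positivity)
    have hu0 : 0 ≤ u v := by simp only [hu]; positivity
    have hu1 : u v ≤ 1 := by
      simp only [hu]
      rw [div_le_one hs]
      apply Real.le_sqrt_of_sq_le
      linarith
    have huz : 1 - (u v) ^ 2 = 1 / (1 + v ^ 2) := by
      simp only [hu]
      rw [div_pow, hsq]
      field_simp
      ring
    set X := Real.exp (-(y ^ 2) / (2 * (1 + v ^ 2))) with hX
    have hX1 : X ≤ 1 := by
      rw [hX, Real.exp_le_one_iff]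
      apply div_nonpos_of_nonpos_of_nonneg
      · nlinarith [sq_nonneg y]
      · positivity
    have hX2 : X ≤ Real.exp (-(y ^ 2) * (1 - u v) / 2) := by
      apply Real.exp_le_exp.mpr
      have : -(y ^ 2) / (2 * (1 + v ^ 2)) = -(y ^ 2) * (1 - (u v) ^ 2) / 2 := by
        rw [huz]; field_simp
      rw [this]
      have h5 : 1 - u v ≤ 1 - (u v) ^ 2 := by nlinarith
      nlinarith [mul_le_mul_of_nonneg_left h5 (sq_nonneg y)]
    have hX0 : 0 < X := Real.exp_pos _
    have hw : zz v ^ 1 * rho t y v ≤ ((1 + v ^ 2)⁻¹ * (Real.sqrt (1 + v ^ 2))⁻¹) * X := by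
      have e : zz v ^ 1 * rho t y v = (v ^ 2 / (t ^ 2 + v ^ 2)) *
          (((1 + v ^ 2)⁻¹ * (Real.sqrt (1 + v ^ 2))⁻¹) * X) := by
        unfold zz rho BB
        rw [← hX]
        field_simp
      rw [e]
      have : v ^ 2 / (t ^ 2 + v ^ 2) ≤ 1 := by
        rw [div_le_one (by positivity)]
        nlinarith [sq_nonneg t]
      exact mul_le_of_le_one_left (by positivity) this
    calc (1 + y ^ 2) * (zz v ^ 1 * rho t y v)
        ≤ (1 + y ^ 2) * (((1 + v ^ 2)⁻¹ * (Real.sqrt (1 + v ^ 2))⁻¹) * X) := by gcongr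
      _ = ((1 + v ^ 2)⁻¹ * (Real.sqrt (1 + v ^ 2))⁻¹) * (X + y ^ 2 * X) := by ring
      _ ≤ _ := by
        simp only [hg']
        gcongr
  linarith

lemma JJ_nonneg {t : ℝ} (ht : 0 < t) (y : ℝ) (k : ℕ) : 0 ≤ JJ k t y := by
  unfold JJ
  apply integral_nonneg
  intro v
  have := rho_pos ht y v
  have := zz_nonneg v
  simp only [Pi.zero_apply]
  positivity

lemma JJ_mono {t : ℝ} (ht : 0 < t) (y : ℝ) {k m : ℕ} (hkm : k ≤ m) : JJ m t y ≤ JJ k t y := by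
  unfold JJ
  apply integral_mono (zzpow_rho_int ht y m) (zzpow_rho_int ht y k)
  intro v
  have h := rho_pos ht y v
  have := pow_le_pow_of_le_one (zz_nonneg v) (zz_le_one v) hkm
  simp only
  gcongr

lemma ratio_diff {a b : ℝ} (ha : 0 < a) (hab : a < b) (hb2 : b ≤ 1 / 2) (y : ℝ) {k : ℕ}
    (hk : 1 ≤ k) :
    |JJ k a y / JJ 0 a y - JJ k b y / JJ 0 b y| ≤
      (b - a) * (1 + 42 * (JJ 1 a y / JJ 0 a y) / a) := by
  have hb : 0 < b := ha.trans hab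
  have hDa := JJ_zero_pos ha y
  have hDb := JJ_zero_pos hb y
  have h1 := JJ_diff ha hab y hk
  have h0 := JJ0_diff ha hab hb2 y
  have hN := JJ_nonneg ha y k
  have hN1 := JJ_mono ha y hk
  have e : JJ k a y / JJ 0 a y - JJ k b y / JJ 0 b y =
      (JJ k a y - JJ k b y) / JJ 0 b y -
        (JJ k a y / JJ 0 a y) * ((JJ 0 a y - JJ 0 b y) / JJ 0 b y) := by
    field_simp
    ring
  have h1' : |(JJ k a y - JJ k b y) / JJ 0 b y| ≤ b - a := by
    rw [abs_div, abs_of_pos hDb, div_le_iff₀ hDb]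
    refine h1.trans (mul_le_mul_of_nonneg_right ?_ hDb.le)
    nlinarith
  have h0' : |(JJ 0 a y - JJ 0 b y) / JJ 0 b y| ≤ (b - a) * 42 / a := by
    rw [abs_div, abs_of_pos hDb, div_le_iff₀ hDb]
    refine h0.trans ?_
    rw [← mul_assoc]
    refine mul_le_mul_of_nonneg_right ?_ hDb.le
    rw [← mul_div_assoc, div_le_div_iff₀ (by positivity) ha]
    have : 0 ≤ (b - a) * a * 21 * (b - a) := by
      have : 0 ≤ b - a := by linarith
      positivity
    nlinarith
  have hR0 : 0 ≤ JJ k a y / JJ 0 a y := by positivity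
  have hR1 : JJ k a y / JJ 0 a y ≤ JJ 1 a y / JJ 0 a y := by gcongr
  rw [e]
  refine (abs_sub _ _).trans ?_
  rw [abs_mul, abs_of_nonneg hR0]
  have := mul_le_mul hR1 h0' (abs_nonneg _) (hR0.trans hR1)
  calc _ ≤ (b - a) + (JJ 1 a y / JJ 0 a y) * ((b - a) * 42 / a) := add_le_add h1' this
    _ = _ := by ring

lemma postVar_diff {a b : ℝ} (ha : 0 < a) (hab : a < b) (hb2 : b ≤ 1 / 2) (y : ℝ) :
    |postVar a y - postVar b y| ≤
      4000 * (b - a) * min (Real.exp (y ^ 2 / 2)) ((1 + y ^ 2) / a) := by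
  have hb : 0 < b := ha.trans hab
  have hDa := JJ_zero_pos ha y
  have hDb := JJ_zero_pos hb y
  rw [postVar_formula ha, postVar_formula hb]
  have h1 := ratio_diff ha hab hb2 y (k := 1) le_rfl
  have h2 := ratio_diff ha hab hb2 y (k := 2) (by norm_num)
  have ra0 : 0 ≤ JJ 1 a y / JJ 0 a y := div_nonneg (JJ_nonneg ha y 1) hDa.le
  have rb0 : 0 ≤ JJ 1 b y / JJ 0 b y := div_nonneg (JJ_nonneg hb y 1) hDb.le
  have ra1 : JJ 1 a y / JJ 0 a y ≤ 1 := by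
    rw [div_le_one hDa]; exact JJ_mono ha y (by norm_num)
  have rb1 : JJ 1 b y / JJ 0 b y ≤ 1 := by
    rw [div_le_one hDb]; exact JJ_mono hb y (by norm_num)
  have hup : (1 + y ^ 2) * (JJ 1 a y / JJ 0 a y) ≤ 30 * a * Real.exp (y ^ 2 / 2) := by
    rw [← mul_div_assoc, div_le_iff₀ hDa]
    refine (JJ1_upper ha y).trans ?_
    have hlow := JJ_lower ha (by linarith) y
    have he : Real.exp (-(y ^ 2 / 2)) ≤ Real.exp (-(y ^ 2) / (2 * (1 + a ^ 2))) := by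
      apply Real.exp_le_exp.mpr
      rw [neg_div]
      apply neg_le_neg
      apply div_le_div_of_nonneg_left (by positivity) (by positivity)
      nlinarith [sq_nonneg a]
    have h5 : Real.exp (-(y ^ 2 / 2)) / (10 * a) ≤ JJ 0 a y := le_trans (by gcongr) hlow
    calc (3 : ℝ) = 30 * a * Real.exp (y ^ 2 / 2) * (Real.exp (-(y ^ 2 / 2)) / (10 * a)) := by
          rw [Real.exp_neg]
          field_simp
          norm_num
      _ ≤ _ := by gcongr
  set A := JJ 1 a y / JJ 0 a y
  set B := JJ 1 b y / JJ 0 b y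
  set A2 := JJ 2 a y / JJ 0 a y
  set B2 := JJ 2 b y / JJ 0 b y
  set Q := (b - a) * (1 + 42 * A / a) with hQ
  have hQ0 : 0 ≤ Q := (abs_nonneg _).trans h1
  have hy := sq_nonneg y
  have hmain : |A + y ^ 2 * (A2 - A ^ 2) - (B + y ^ 2 * (B2 - B ^ 2))| ≤ 3 * (1 + y ^ 2) * Q := by
    have e : A + y ^ 2 * (A2 - A ^ 2) - (B + y ^ 2 * (B2 - B ^ 2)) =
        (A - B) + y ^ 2 * ((A2 - B2) - (A - B) * (A + B)) := by ring
    rw [e]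
    have h3 : |(A - B) * (A + B)| ≤ Q * 2 := by
      rw [abs_mul, abs_of_nonneg (add_nonneg ra0 rb0)]
      exact mul_le_mul h1 (by linarith) (by linarith) hQ0
    have h4 : |(A2 - B2) - (A - B) * (A + B)| ≤ 3 * Q := by
      refine (abs_sub _ _).trans ?_
      linarith
    refine (abs_add_le _ _).trans ?_
    rw [abs_mul, abs_of_nonneg hy]
    nlinarith [mul_le_mul_of_nonneg_left h4 hy]
  refine hmain.trans ?_
  have hba : 0 < b - a := by linarith
  have hexp : 1 + y ^ 2 ≤ 2 * Real.exp (y ^ 2 / 2) := by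
    have := Real.add_one_le_exp (y ^ 2 / 2)
    linarith
  have k1 : 3 * (1 + y ^ 2) * Q ≤ 4000 * (b - a) * Real.exp (y ^ 2 / 2) := by
    have e : 3 * (1 + y ^ 2) * Q =
      3 * (b - a) * ((1 + y ^ 2) + 42 * (((1 + y ^ 2) * A) / a)) := by rw [hQ]; ring
    have h6 : ((1 + y ^ 2) * A) / a ≤ 30 * Real.exp (y ^ 2 / 2) := by
      rw [div_le_iff₀ ha]
      linarith
    rw [e]
    have hE := Real.exp_pos (y ^ 2 / 2)
    have h7 : (1 + y ^ 2) + 42 * (((1 + y ^ 2) * A) / a) ≤ 1262 * Real.exp (y ^ 2 / 2) := by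
      linarith
    have := mul_le_mul_of_nonneg_left h7 (show 0 ≤ 3 * (b - a) by linarith)
    nlinarith [mul_pos hba hE]
  have k2 : 3 * (1 + y ^ 2) * Q ≤ 4000 * (b - a) * ((1 + y ^ 2) / a) := by
    have h8 : 1 + 42 * A / a ≤ 43 / a := by
      have : 43 / a = 1 / a + 42 * 1 / a := by ring
      rw [this]
      have h9 : 1 ≤ 1 / a := by rw [le_div_iff₀ ha]; linarith
      have : 42 * A / a ≤ 42 * 1 / a := by gcongr
      linarith
    have h10 : Q ≤ (b - a) * (43 / a) := mul_le_mul_of_nonneg_left h8 hba.le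
    calc 3 * (1 + y ^ 2) * Q ≤ 3 * (1 + y ^ 2) * ((b - a) * (43 / a)) := by gcongr
      _ = 129 * ((b - a) * ((1 + y ^ 2) / a)) := by ring
      _ ≤ 4000 * ((b - a) * ((1 + y ^ 2) / a)) := by gcongr; norm_num
      _ = _ := by ring
  rcases min_choice (Real.exp (y ^ 2 / 2)) ((1 + y ^ 2) / a) with h | h <;> rw [h]
  · exact k1
  · exact k2

/-- Gaussian tail profile. -/
def GG (t : ℝ) : ℝ := (1 + 2 * t ^ 2) ^ 2 * Real.exp (-(t ^ 2) / 2)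

lemma GG_nonneg (t : ℝ) : 0 ≤ GG t := by unfold GG; positivity

lemma GG_int : Integrable GG := by
  have h : ∀ k : ℕ, Integrable (fun t : ℝ => t ^ k * Real.exp (-(1 / 2) * t ^ 2)) := by
    intro k
    have := integrable_rpow_mul_exp_neg_mul_sq (b := 1 / 2) (by norm_num) (s := (k : ℝ))
      (by have : (0 : ℝ) ≤ k := Nat.cast_nonneg k
          linarith)
    simpa using this
  have h2 := ((h 0).add ((h 2).const_mul 4)).add ((h 4).const_mul 4)
  refine h2.congr (Filter.Eventually.of_forall fun t => ?_)
  unfold GG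
  simp only [Pi.add_apply]
  rw [show -(t ^ 2) / 2 = -(1 / 2) * t ^ 2 by ring]
  ring

lemma exp_Icc {S : ℝ} (hS : 0 < S) (c : ℝ) (hc : c ^ 2 = 1) :
    ∫ y in Set.Icc (-S) S, Real.exp (c * S * y / 2) ≤ 2 / S * Real.exp (S ^ 2 / 2) := by
  rw [integral_Icc_eq_integral_Ioc, ← intervalIntegral.integral_of_le (by linarith)]
  have hc0 : c ≠ 0 := by rintro rfl; norm_num at hc
  have hd : ∀ y ∈ Set.uIcc (-S) S, HasDerivAt
      (fun y => 2 * c / S * Real.exp (c * S * y / 2)) (Real.exp (c * S * y / 2)) y := by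
    intro y _
    have h1 : HasDerivAt (fun y : ℝ => c * S * y / 2) (c * S / 2) y := by
      have := ((hasDerivAt_id y).const_mul (c * S)).div_const 2
      simpa using this
    refine (h1.exp.const_mul (2 * c / S)).congr_deriv ?_
    field_simp
    linear_combination hc
  rw [intervalIntegral.integral_eq_sub_of_hasDerivAt hd
    (by apply Continuous.intervalIntegrable; fun_prop)]
  have hp : 0 < 2 / S := by positivity
  rcases (sq_eq_sq_iff_eq_or_eq_neg.mp (hc.trans (one_pow 2).symm)) with h | h
  · subst h
    have e : (1 : ℝ) * S * S / 2 = S ^ 2 / 2 := by ring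
    rw [e]
    have := mul_pos hp (Real.exp_pos (1 * S * -S / 2))
    rw [mul_one]
    linarith
  · subst h
    have e : (-1 : ℝ) * S * -S / 2 = S ^ 2 / 2 := by ring
    rw [e]
    have := mul_pos hp (Real.exp_pos (-1 * S * S / 2))
    have e2 : 2 * (-1 : ℝ) / S = -(2 / S) := by ring
    rw [e2]
    linarith

lemma tail_pt {S y : ℝ} (hS : 0 < S) (hy : S ≤ y) :
    (1 + y ^ 2) ^ 2 * Real.exp (-(y ^ 2) / 2) ≤
      (1 + 2 * S ^ 2) ^ 2 * Real.exp (-(S ^ 2) / 2) * GG (y - S) := by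
  unfold GG
  have h1 : 1 + y ^ 2 ≤ (1 + 2 * S ^ 2) * (1 + 2 * (y - S) ^ 2) := by
    nlinarith [sq_nonneg (y - 2 * S), mul_nonneg (sq_nonneg S) (sq_nonneg (y - S))]
  have h2 : Real.exp (-(y ^ 2) / 2) ≤ Real.exp (-(S ^ 2) / 2) * Real.exp (-((y - S) ^ 2) / 2) := by
    rw [← Real.exp_add]
    apply Real.exp_le_exp.mpr
    nlinarith
  calc _ ≤ ((1 + 2 * S ^ 2) * (1 + 2 * (y - S) ^ 2)) ^ 2 *
      (Real.exp (-(S ^ 2) / 2) * Real.exp (-((y - S) ^ 2) / 2)) := by gcongr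
    _ = _ := by ring

lemma min_int {a : ℝ} (ha : 0 < a) :
    Integrable (fun y : ℝ => (min (Real.exp (y ^ 2 / 2)) ((1 + y ^ 2) / a)) ^ 2)
      (gaussianReal 0 1) := by
  have h : Integrable (fun y : ℝ => ((1 + y ^ 2) / a) ^ 2) (gaussianReal 0 1) := by
    have h2 := (((gauss_int 0 1 0).add ((gauss_int 0 1 2).const_mul 2)).add
      (gauss_int 0 1 4)).div_const (a ^ 2)
    refine h2.congr (Filter.Eventually.of_forall fun t => ?_)
    simp only [Pi.add_apply]
    rw [div_pow]
    ring
  refine h.mono' (by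
    apply Measurable.aestronglyMeasurable
    fun_prop) (Filter.Eventually.of_forall fun y => ?_)
  rw [Real.norm_of_nonneg (sq_nonneg _)]
  have : 0 ≤ min (Real.exp (y ^ 2 / 2)) ((1 + y ^ 2) / a) := by positivity
  gcongr
  exact min_le_right _ _

lemma min_bound {a S : ℝ} (ha : 0 < a) (hS : 0 < S) :
    ∫ y, (min (Real.exp (y ^ 2 / 2)) ((1 + y ^ 2) / a)) ^ 2 ∂(gaussianReal 0 1) ≤
      4 / S * Real.exp (S ^ 2 / 2) +
        2 * ((1 + 2 * S ^ 2) ^ 2 * Real.exp (-(S ^ 2) / 2) / a ^ 2) * ∫ t, GG t := by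
  rw [integral_gaussianReal_eq_integral_smul one_ne_zero]
  set c := (1 + 2 * S ^ 2) ^ 2 * Real.exp (-(S ^ 2) / 2) / a ^ 2 with hc
  have hc0 : 0 ≤ c := by positivity
  have iI : ∀ d : ℝ, IntegrableOn (fun y => Real.exp (d * S * y / 2)) (Set.Icc (-S) S) := by
    intro d
    apply Continuous.integrableOn_Icc
    fun_prop
  set U1 : ℝ → ℝ := (Set.Icc (-S) S).indicator
    (fun y => Real.exp (1 * S * y / 2) + Real.exp (-1 * S * y / 2)) with hU1
  set U2 : ℝ → ℝ := fun y => c * (GG (y - S) + GG (y + S)) with hU2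
  have i1 : Integrable U1 := by
    rw [hU1, integrable_indicator_iff measurableSet_Icc]
    exact (iI 1).add (iI (-1))
  have ia : Integrable (fun y => GG (y - S)) := GG_int.comp_sub_right S
  have ib : Integrable (fun y => GG (y + S)) := GG_int.comp_add_right S
  have i2 : Integrable U2 := (ia.add ib).const_mul c
  have v1 : ∫ y, U1 y ≤ 4 / S * Real.exp (S ^ 2 / 2) := by
    rw [hU1, integral_indicator measurableSet_Icc, integral_add (iI 1) (iI (-1))]
    have := exp_Icc hS 1 (by norm_num)
    have := exp_Icc hS (-1) (by norm_num)
    have e : 4 / S * Real.exp (S ^ 2 / 2) =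
      2 / S * Real.exp (S ^ 2 / 2) + 2 / S * Real.exp (S ^ 2 / 2) := by ring
    linarith
  have v2 : ∫ y, U2 y = 2 * c * ∫ t, GG t := by
    rw [hU2, integral_const_mul, integral_add ia ib, integral_sub_right_eq_self,
      integral_add_right_eq_self]
    ring
  calc _ ≤ ∫ y, (U1 y + U2 y) := by
        apply integral_mono_of_nonneg
        · filter_upwards with y
          have := gaussianPDFReal_nonneg 0 1 y
          simp only [Pi.zero_apply, smul_eq_mul]
          positivity
        · exact i1.add i2
        · filter_upwards with y
          set m := min (Real.exp (y ^ 2 / 2)) ((1 + y ^ 2) / a) with hm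
          have hm0 : 0 ≤ m := by rw [hm]; positivity
          have hpdf : gaussianPDFReal 0 1 y ≤ Real.exp (-(y ^ 2) / 2) := by
            rw [gaussianPDFReal]
            have hs : (Real.sqrt (2 * Real.pi * ((1 : ℝ≥0) : ℝ)))⁻¹ ≤ 1 := by
              apply inv_le_one_of_one_le₀
              rw [Real.one_le_sqrt]
              have := Real.two_le_pi
              push_cast
              nlinarith
            have e : -(y - 0) ^ 2 / (2 * ((1 : ℝ≥0) : ℝ)) = -(y ^ 2) / 2 := by
              push_cast; ring
            rw [e]
            exact mul_le_of_le_one_left (Real.exp_pos _).le hs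
          have h1 : gaussianPDFReal 0 1 y • m ^ 2 ≤ Real.exp (-(y ^ 2) / 2) * m ^ 2 := by
            rw [smul_eq_mul]; gcongr
          refine h1.trans ?_
          have hU2n : 0 ≤ U2 y := by
            have := GG_nonneg (y - S)
            have := GG_nonneg (y + S)
            simp only [hU2]; positivity
          by_cases hy : y ∈ Set.Icc (-S) S
          · have hm1 : m ≤ Real.exp (y ^ 2 / 2) := min_le_left _ _
            have e1 : U1 y = Real.exp (1 * S * y / 2) + Real.exp (-1 * S * y / 2) := by
              rw [hU1, Set.indicator_of_mem hy]
            have h2 : Real.exp (-(y ^ 2) / 2) * m ^ 2 ≤ Real.exp (y ^ 2 / 2) := by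
              calc _ ≤ Real.exp (-(y ^ 2) / 2) * Real.exp (y ^ 2 / 2) ^ 2 := by gcongr
                _ = _ := by
                  rw [← Real.exp_nat_mul, ← Real.exp_add]
                  congr 1
                  push_cast
                  ring
            have h3 : Real.exp (y ^ 2 / 2) ≤ U1 y := by
              rw [e1]
              have p1 := Real.exp_pos (1 * S * y / 2)
              have p2 := Real.exp_pos (-1 * S * y / 2)
              rcases le_total 0 y with h | h
              · have : Real.exp (y ^ 2 / 2) ≤ Real.exp (1 * S * y / 2) := by
                  apply Real.exp_le_exp.mpr
                  nlinarith [hy.2]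
                linarith
              · have : Real.exp (y ^ 2 / 2) ≤ Real.exp (-1 * S * y / 2) := by
                  apply Real.exp_le_exp.mpr
                  nlinarith [hy.1]
                linarith
            linarith
          · have e1 : U1 y = 0 := by rw [hU1, Set.indicator_of_notMem hy]
            have hm1 : m ≤ (1 + y ^ 2) / a := min_le_right _ _
            have h2 : Real.exp (-(y ^ 2) / 2) * m ^ 2 ≤
                ((1 + y ^ 2) ^ 2 * Real.exp (-(y ^ 2) / 2)) / a ^ 2 := by
              calc _ ≤ Real.exp (-(y ^ 2) / 2) * ((1 + y ^ 2) / a) ^ 2 := by gcongr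
                _ = _ := by rw [div_pow]; ring
            rw [e1, zero_add]
            refine h2.trans ?_
            have hg1 := GG_nonneg (y - S)
            have hg2 := GG_nonneg (y + S)
            rcases lt_or_ge S y with h | h
            · have h3 := tail_pt hS h.le
              calc _ ≤ (1 + 2 * S ^ 2) ^ 2 * Real.exp (-(S ^ 2) / 2) * GG (y - S) / a ^ 2 := by
                    gcongr
                _ = c * GG (y - S) := by rw [hc]; ring
                _ ≤ U2 y := by
                  simp only [hU2]
                  gcongr
                  linarith
            · have h' : S ≤ -y := by
                by_contra hh
                exact hy ⟨by linarith, h⟩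
              have h3 := tail_pt hS h'
              have e3 : GG (-y - S) = GG (y + S) := by
                unfold GG
                rw [show (-y - S) ^ 2 = (y + S) ^ 2 by ring]
              rw [e3, neg_sq] at h3
              calc _ ≤ (1 + 2 * S ^ 2) ^ 2 * Real.exp (-(S ^ 2) / 2) * GG (y + S) / a ^ 2 := by
                    gcongr
                _ = c * GG (y + S) := by rw [hc]; ring
                _ ≤ U2 y := by
                  simp only [hU2]
                  gcongr
                  linarith
    _ = (∫ y, U1 y) + ∫ y, U2 y := integral_add i1 i2
    _ ≤ _ := by rw [v2]; linarith

lemma min_final {a : ℝ} (ha : 0 < a) (ha2 : a ≤ 1 / 2) :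
    ∫ y, (min (Real.exp (y ^ 2 / 2)) ((1 + y ^ 2) / a)) ^ 2 ∂(gaussianReal 0 1) ≤
      (4 + 98 * ∫ t, GG t) * (a⁻¹ * zet a ^ 2) := by
  have hl : Real.log 2 ≤ Real.log (1 / a) := by
    apply Real.log_le_log (by norm_num)
    rw [le_div_iff₀ ha]; linarith
  have hl2 := Real.log_two_gt_d9
  have hZ : zet a ^ 2 = 2 * Real.log (1 / a) := by
    unfold zet
    rw [Real.sq_sqrt (by linarith)]
  set W := zet a ^ 2 with hW
  have hW1 : 1 ≤ W := by rw [hZ]; linarith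
  have hW0 : 0 < W := by linarith
  have hG : 0 ≤ ∫ t, GG t := integral_nonneg GG_nonneg
  set q := 2 * Real.log (W / a) with hq
  have hq' : q = W + 2 * Real.log W := by
    rw [hq, hZ, ← hZ, Real.log_div hW0.ne' ha.ne', hZ, one_div, Real.log_inv]
    ring
  have hlW0 : 0 ≤ Real.log W := Real.log_nonneg hW1
  have hlW1 := Real.log_le_sub_one_of_pos hW0
  have hq1 : 1 ≤ q := by linarith
  have hq3 : q ≤ 3 * W := by linarith
  have hS1 : 1 ≤ Real.sqrt q := by rw [Real.one_le_sqrt]; exact hq1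
  have hS2 : Real.sqrt q ^ 2 = q := Real.sq_sqrt (by linarith)
  have h := min_bound ha (S := Real.sqrt q) (by linarith)
  have e1 : Real.exp (Real.sqrt q ^ 2 / 2) = W / a := by
    rw [hS2, hq, mul_div_cancel_left₀ _ (by norm_num), Real.exp_log (by positivity)]
  have e2 : Real.exp (-(Real.sqrt q ^ 2) / 2) = a / W := by
    rw [neg_div, Real.exp_neg, e1, inv_div]
  rw [e1, e2, hS2] at h
  refine h.trans ?_
  have h1 : 4 / Real.sqrt q * (W / a) ≤ 4 * (a⁻¹ * W) := by
    have : 4 / Real.sqrt q ≤ 4 := div_le_self (by norm_num) hS1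
    calc _ ≤ 4 * (W / a) := by gcongr
      _ = _ := by ring
  have h2 : (1 + 2 * q) ^ 2 * (a / W) / a ^ 2 ≤ 49 * (a⁻¹ * W) := by
    have : 1 + 2 * q ≤ 7 * W := by linarith
    calc _ ≤ (7 * W) ^ 2 * (a / W) / a ^ 2 := by gcongr
      _ = _ := by field_simp; norm_num
  have h3 := mul_le_mul_of_nonneg_right h2 hG
  linarith

theorem stmt_18 :
    ∃ K > 0, ∀ n : ℕ, 1 ≤ n → ∀ τ₁ τ₂ : ℝ,
      1 / (n : ℝ) ≤ τ₁ → τ₁ < τ₂ → τ₂ ≤ 1 / 2 →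
        (∫ y, (postVar τ₁ y - postVar τ₂ y) ^ 2 ∂(gaussianReal 0 1)) ≤
          K * ((τ₂ - τ₁) ^ 2 * τ₁⁻¹ * zet τ₁ ^ 2) := by
  have hG : 0 ≤ ∫ t, GG t := integral_nonneg GG_nonneg
  refine ⟨4000 ^ 2 * (4 + 98 * ∫ t, GG t), by positivity, ?_⟩
  intro n hn a b hna hab hb2
  have hn0 : (0 : ℝ) < n := by exact_mod_cast hn
  have ha : 0 < a := lt_of_lt_of_le (by positivity) hna
  have h1 : ∫ y, (postVar a y - postVar b y) ^ 2 ∂(gaussianReal 0 1) ≤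
      ∫ y, (4000 * (b - a)) ^ 2 * (min (Real.exp (y ^ 2 / 2)) ((1 + y ^ 2) / a)) ^ 2
        ∂(gaussianReal 0 1) := by
    apply integral_mono_of_nonneg
    · exact Filter.Eventually.of_forall fun y => sq_nonneg _
    · exact (min_int ha).const_mul _
    · refine Filter.Eventually.of_forall fun y => ?_
      simp only
      rw [← mul_pow, ← sq_abs (postVar a y - postVar b y)]
      have := postVar_diff ha hab hb2 y
      gcongr
  refine h1.trans ?_
  rw [integral_const_mul]
  have h2 := min_final ha (by linarith)
  calc _ ≤ (4000 * (b - a)) ^ 2 * ((4 + 98 * ∫ t, GG t) * (a⁻¹ * zet a ^ 2)) := by gcongr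
    _ = _ := by ring

end
end
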